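/- (i) The exceptional set E has packing dimension zero; (ii) for every S ∈ Λ_e, the relative exceptional set E^S has box-counting dimension zero; (iii) the infinitely renormalizable set E_∞ has Hausdorff dimension zero. -/

import Mathlib

open Set Filter MeasureTheory Topology

noncomputable section

/-- The β-transformation `x ↦ βx - ⌊βx⌋`. -/
def Tbeta (β x : ℝ) : ℝ := Int.fract (β * x)

/-- The survivor set `K_β(t)`: points of `[0,1)` whose orbit never enters `[0,t)`. -/
def survivor (β t : ℝ) : Set ℝ :=
  {x | x ∈ Set.Ico (0 : ℝ) 1 ∧ ∀ n : ℕ, t ≤ (Tbeta β)^[n] x}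

/-- The set-valued bifurcation set `E_β`. -/
def Ebif (β : ℝ) : Set ℝ :=
  {t | t ∈ Set.Ico (0 : ℝ) 1 ∧ ∀ t' : ℝ, t < t' → survivor β t' ≠ survivor β t}

/-- `(c)_β = Σ_{i≥1} c_i β^{-i}` for an infinite digit sequence (indexed from `0`). -/
def valSeq (β : ℝ) (c : ℕ → ℕ) : ℝ := ∑' i : ℕ, (c i : ℝ) / β ^ (i + 1)

/-- `(w 0^∞)_β` for a finite word `w`. -/
def valWord (β : ℝ) (w : List ℕ) : ℝ :=
  ∑ i ∈ Finset.range w.length, (w.getD i 0 : ℝ) / β ^ (i + 1)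

/-- `w⁺`: increment the last letter of `w`. -/
def wplus (w : List ℕ) : List ℕ := w.dropLast ++ [w.getLast! + 1]

/-- `w⁻`: decrement the last letter of `w`. -/
def wminus (w : List ℕ) : List ℕ := w.dropLast ++ [w.getLast! - 1]

/-- `θ`: increment every digit of `w` by one. -/
def theta (w : List ℕ) : List ℕ := w.map (· + 1)

/-- `L(w)`: the lexicographically largest cyclic permutation of `w`. -/
def maxCyc (w : List ℕ) : List ℕ := ((List.range w.length).map w.rotate).foldl max []

/-- `w^∞`: the periodic sequence with period block `w`. -/
def perSeq (w : List ℕ) : ℕ → ℕ := fun i => w.getD (i % w.length) 0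

/-- The sequence given by the word `w` followed by the sequence `c`. -/
def wordSeq (w : List ℕ) (c : ℕ → ℕ) : ℕ → ℕ :=
  fun i => if i < w.length then w.getD i 0 else c (i - w.length)

/-- Strict lexicographic order `≺` on sequences. -/
def seqLt (x y : ℕ → ℕ) : Prop := ∃ n, (∀ i < n, x i = y i) ∧ x n < y n

/-- Lexicographic order `≼` on sequences. -/
def seqLe (x y : ℕ → ℕ) : Prop := x = y ∨ seqLt x y

/-- The `n`-fold left shift `σⁿ` on sequences. -/
def shiftn (n : ℕ) (x : ℕ → ℕ) : ℕ → ℕ := fun i => x (i + n)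

/-- One step of the Farey recursion: insert the concatenation `w_i w_{i+1}`
between consecutive entries. -/
def fareyInsert : List (List ℕ) → List (List ℕ)
  | [] => []
  | [w] => [w]
  | w :: v :: rest => w :: (w ++ v) :: fareyInsert (v :: rest)

/-- The ordered set `F_n` of Farey words of level `n`. -/
def fareyLevel : ℕ → List (List ℕ)
  | 0 => [[0], [1]]
  | n + 1 => fareyInsert (fareyLevel n)

/-- `F`: all Farey words of length at least two. -/
def FareySet : Set (List ℕ) := {w | (∃ n, w ∈ fareyLevel n) ∧ w ≠ [0] ∧ w ≠ [1]}

/-- `F̂ = F ∪ {1}`. -/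
def FareyHat : Set (List ℕ) := FareySet ∪ {[1]}

/-- The extended Farey set `F_e = {θ^k(w) : w ∈ F̂, k ≥ 0}`. -/
def FareyExt : Set (List ℕ) := {w | ∃ v ∈ FareyHat, ∃ k : ℕ, w = theta^[k] v}

/-- A nonempty word is Lyndon iff it is strictly smaller than each of its nontrivial
cyclic rotations (equivalently: aperiodic and lexicographically smallest among its
cyclic permutations). -/
def IsLyndon (w : List ℕ) : Prop := w ≠ [] ∧ ∀ i, 0 < i → i < w.length → w < w.rotate i

/-- `L_e`: all Lyndon words over `ℕ ∪ {0}` except the single-letter word `0`. -/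
def LyndonExt : Set (List ℕ) := {w | IsLyndon w ∧ w ≠ [0]}

/-- `L`: Lyndon words over `{0,1}` of length at least `2`. -/
def LyndonBin : Set (List ℕ) := {w | IsLyndon w ∧ 2 ≤ w.length ∧ ∀ d ∈ w, d ≤ 1}

/-- The block of `Φ_s` emitted for current digit `d` after previous digit `p`:
`L(s)` for `00`, `s⁻` for `10`, `L(s)⁺` for `01`, `s` for `11`. -/
def phiBlock (s : List ℕ) (p d : ℕ) : List ℕ :=
  if d = 0 then (if p = 0 then maxCyc s else wminus s)
  else (if p = 0 then wplus (maxCyc s) else s)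

def phiAux (s : List ℕ) : ℕ → List ℕ → List ℕ
  | _, [] => []
  | p, d :: rest => phiBlock s p d ++ phiAux s d rest

/-- The substitution `Φ_s` on finite words; `s • r = subst s r`.  An initial digit `0`
produces `s⁻`, an initial digit `1` produces `L(s)⁺`, and thereafter runs
`0^k` resp. `1^l` produce `L(s)^{k-1}` resp. `s^{l-1}`, in accordance with
`Φ_s(0^{k₁}1^{l₁}…) = s⁻ L(s)^{k₁-1} L(s)⁺ s^{l₁-1} …` and
`Φ_s(1^{k₁}0^{l₁}…) = L(s)⁺ s^{k₁-1} s⁻ L(s)^{l₁-1} …`. -/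
def subst (s r : List ℕ) : List ℕ :=
  match r with
  | [] => []
  | d :: rest => phiBlock s (1 - d) d ++ phiAux s d rest

/-- The substitution `Φ_s` on infinite sequences, as the limit of its values
on initial segments (each digit contributes a nonempty block, so the `i`-th letter
is determined by the first `i+1` digits). -/
def phiSeq (s : List ℕ) (c : ℕ → ℕ) : ℕ → ℕ :=
  fun i => (subst s (List.ofFn fun j : Fin (i + 1) => c j)).getD i 0

/-- `Λ_e(m) = {s₁ • s₂ • … • s_m : s₁ ∈ F_e, s₂,…,s_m ∈ F}`. -/
def LambdaE (m : ℕ) : Set (List ℕ) :=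
  {w | ∃ s₁ ∈ FareyExt, ∃ rs : List (List ℕ),
    rs.length = m - 1 ∧ (∀ r ∈ rs, r ∈ FareySet) ∧ w = rs.foldl subst s₁}

/-- `Λ_e = ∪_{m≥1} Λ_e(m)`. -/
def LambdaExt : Set (List ℕ) := ⋃ m ∈ Set.Ici 1, LambdaE m

/-- `β_ℓ^S`: the base `β > 1` with `(L(S)^∞)_β = 1` (it is unique since
`β ↦ (c)_β` is strictly decreasing). -/
def betaL (S : List ℕ) : ℝ :=
  Classical.epsilon fun β : ℝ => 1 < β ∧ valSeq β (perSeq (maxCyc S)) = 1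

/-- `β_*^S`: the base `β > 1` with `(L(S)⁺ S⁻ L(S)^∞)_β = 1`. -/
def betaStar (S : List ℕ) : ℝ :=
  Classical.epsilon fun β : ℝ =>
    1 < β ∧ valSeq β (wordSeq (wplus (maxCyc S) ++ wminus S) (perSeq (maxCyc S))) = 1

/-- `β_r^S`: the base `β > 1` with `(L(S)⁺ S^∞)_β = 1`. -/
def betaR (S : List ℕ) : ℝ :=
  Classical.epsilon fun β : ℝ => 1 < β ∧ valSeq β (wordSeq (wplus (maxCyc S)) (perSeq S)) = 1

/-- The Lyndon/Farey interval `J^S = [β_ℓ^S, β_r^S]`. -/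
def Jint (S : List ℕ) : Set ℝ := Set.Icc (betaL S) (betaR S)

/-- The basic interval `I^S = [β_ℓ^S, β_*^S]`. -/
def Iint (S : List ℕ) : Set ℝ := Set.Icc (betaL S) (betaStar S)

/-- The exceptional set `E = (1,∞) ∖ ∪_{s ∈ F_e} J^s`. -/
def Eexc : Set ℝ := Set.Ioi 1 \ ⋃ s ∈ FareyExt, Jint s

/-- The relative exceptional set `E^S = (J^S ∖ I^S) ∖ ∪_{r ∈ F} J^{S•r}`. -/
def EexcRel (S : List ℕ) : Set ℝ :=
  (Jint S \ Iint S) \ ⋃ r ∈ FareySet, Jint (subst S r)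

/-- The infinitely renormalizable set `E_∞ = ∩_{m≥1} ∪_{S ∈ Λ_e(m)} J^S`. -/
def Einf : Set ℝ := ⋂ m ∈ Set.Ici 1, ⋃ S ∈ LambdaE m, Jint S

/-- `E_L = E ∪ {β_ℓ^s : s ∈ F_e}`. -/
def EL : Set ℝ := Eexc ∪ {x | ∃ s ∈ FareyExt, x = betaL s}

/-- The critical value `τ(β) = min{t > 0 : dim_H K_β(t) = 0}`. -/
def tau (β : ℝ) : ℝ := sInf {t : ℝ | 0 < t ∧ dimH (survivor β t) = 0}

end

noncomputable section

/-- The least number of `ε`-balls needed to cover `E` (as a value in `ENNReal`). -/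
def coverNum (E : Set ℝ) (ε : ℝ) : ENNReal :=
  sInf {n : ENNReal | ∃ F : Finset ℝ, (F.card : ENNReal) = n ∧ E ⊆ ⋃ x ∈ F, Metric.ball x ε}

/-- The (upper, hence also lower) box-counting dimension of `E` is zero: for every
`s > 0`, eventually as `ε → 0⁺` the covering number is at most `ε^{-s}`. -/
def HasBoxDimZero (E : Set ℝ) : Prop :=
  ∀ s : ℝ, 0 < s → ∀ᶠ ε in 𝓝[>] (0 : ℝ), coverNum E ε ≤ ENNReal.ofReal (ε ^ (-s))

/-- The packing dimension of `E` is zero, via the standard characterization of packing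
(= modified upper box) dimension: `E` admits a countable cover by sets of upper
box-counting dimension zero. -/
def HasPackingDimZero (E : Set ℝ) : Prop :=
  ∃ C : ℕ → Set ℝ, E ⊆ ⋃ n, C n ∧ ∀ n, HasBoxDimZero (C n)

end

/-!
Farey words are Christoffel words: the word of slope `p / q` is the difference sequence of
`⌊p n / q⌋`, and its largest rotation comes from `⌈p n / q⌉`.  If two expansions of `1`, in bases
`x, y ≥ 1 + δ`, agree on their first `n` digits, then `|x - y| = O((1 + δ)⁻ⁿ)`.

A base that avoids the intervals `J^s` of all Farey words of length at most `N` lies in the gap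
between the intervals of two neighbouring slopes `p / q < p' / q'` with `q, q' ≤ N < q + q'`.  The
expansions at the ends of the gap agree on about `q + q'` digits, so the gap is exponentially short
in `N`.  There are at most `(N + 1)²` gaps, hence a bounded part of `E` has box dimension
zero; the substitution `Φ_S` transports the argument to `E^S`.

For `E_∞`, the interval `J^S` is exponentially short in `|S|`.  The lengths are multiplicative,
`|S • r| = |S| |r|`, and `∑ |r|⁻⁴ ≤ 1` over the Farey words `r`, so the sum of the `|S|⁻⁴` over the
words of `Λ_e(m)` with bounded digits does not grow with `m`.  As `|S| ≥ m` on `Λ_e(m)`, this bounds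
every Hausdorff measure of positive exponent.
-/

/-! ### Expansions in real bases -/

/-- The value `(c)_β` of an integer digit sequence, indexed from `0`.  Integer digits are used
instead of the natural digits of `valSeq` so that words can be compared with their negatives. -/
noncomputable def baseVal (β : ℝ) (c : ℕ → ℤ) : ℝ := ∑' i : ℕ, (c i : ℝ) / β ^ (i + 1)

/-- Sequences of digits from `{0, …, D}`. -/
def IsDigitSeq (D : ℤ) (c : ℕ → ℤ) : Prop := ∀ i, c i ∈ Icc 0 D

lemma valSeq_eq_baseVal (β : ℝ) (c : ℕ → ℕ) : valSeq β c = baseVal β fun i => c i := by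
  simp [valSeq, baseVal]

lemma hasSum_div_pow_succ {β : ℝ} (D : ℝ) (hβ : 1 < β) :
    HasSum (fun i : ℕ => D / β ^ (i + 1)) (D / (β - 1)) := by
  have hβ0 : β ≠ 0 := by positivity
  have hβ1 : β - 1 ≠ 0 := by linarith
  have hterm : ∀ i : ℕ, D / β ^ (i + 1) = D / β * β⁻¹ ^ i := fun i => by
    rw [pow_succ, inv_pow]
    field_simp
  have hlimit : D / (β - 1) = D / β * (1 - β⁻¹)⁻¹ := by
    rw [show 1 - β⁻¹ = (β - 1) / β by field_simp]
    field_simp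
  simp only [hterm, hlimit]
  exact (hasSum_geometric_of_lt_one (by positivity) (inv_lt_one_of_one_lt₀ hβ)).mul_left (D / β)

lemma baseVal_const {β : ℝ} (hβ : 1 < β) (d : ℤ) : baseVal β (fun _ => d) = d / (β - 1) :=
  (hasSum_div_pow_succ d hβ).tsum_eq

namespace IsDigitSeq

variable {D : ℤ} {β : ℝ} {c d : ℕ → ℤ}

lemma mono {D' : ℤ} (hc : IsDigitSeq D c) (h : D ≤ D') : IsDigitSeq D' c :=
  fun i => Icc_subset_Icc_right h (hc i)

lemma cast_nonneg (hc : IsDigitSeq D c) (i : ℕ) : (0 : ℝ) ≤ c i := by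
  exact_mod_cast (hc i).1

lemma cast_le (hc : IsDigitSeq D c) (i : ℕ) : (c i : ℝ) ≤ D := by
  exact_mod_cast (hc i).2

lemma summable (hc : IsDigitSeq D c) (hβ : 1 < β) :
    Summable fun i : ℕ => (c i : ℝ) / β ^ (i + 1) := by
  refine Summable.of_nonneg_of_le (fun i => ?_) (fun i => ?_) (hasSum_div_pow_succ D hβ).summable
  · have := hc.cast_nonneg i
    positivity
  · have := hc.cast_le i
    gcongr

lemma baseVal_le (hc : IsDigitSeq D c) (hβ : 1 < β) : baseVal β c ≤ D / (β - 1) := by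
  rw [← (hasSum_div_pow_succ (D : ℝ) hβ).tsum_eq]
  refine (hc.summable hβ).tsum_le_tsum (fun i => ?_) (hasSum_div_pow_succ (D : ℝ) hβ).summable
  have := hc.cast_le i
  gcongr

lemma sum_le_baseVal (hc : IsDigitSeq D c) (hβ : 1 < β) (s : Finset ℕ) :
    ∑ i ∈ s, (c i : ℝ) / β ^ (i + 1) ≤ baseVal β c :=
  (hc.summable hβ).sum_le_tsum s fun i _ => by
    have := hc.cast_nonneg i
    positivity

lemma head_le_base (hc : IsDigitSeq D c) (hβ : 1 < β) (hv : baseVal β c = 1) : (c 0 : ℝ) ≤ β := by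
  have h := hc.sum_le_baseVal hβ {0}
  rwa [Finset.sum_singleton, zero_add, pow_one, hv, div_le_one (by positivity)] at h

lemma base_le_add_one (hc : IsDigitSeq D c) (hβ : 1 < β) (hv : baseVal β c = 1) :
    β ≤ D + 1 := by
  have h := hc.baseVal_le hβ
  rw [hv, le_div_iff₀ (by linarith)] at h
  linarith

lemma baseVal_sub_le_of_agree {n : ℕ} (hc : IsDigitSeq D c) (hd : IsDigitSeq D d) (hβ : 1 < β)
    (hagree : ∀ i < n, c i = d i) :
    baseVal β d - baseVal β c ≤ D / (β - 1) * β⁻¹ ^ n := by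
  have hsum := (hd.summable hβ).sub (hc.summable hβ)
  have htail : HasSum (fun i : ℕ => D / β ^ (i + n + 1)) (D / (β - 1) * β⁻¹ ^ n) := by
    refine ((hasSum_div_pow_succ (D : ℝ) hβ).mul_right (β⁻¹ ^ n)).congr_fun fun i => ?_
    rw [inv_pow, show i + n + 1 = (i + 1) + n by ring, pow_add]
    field_simp
  have hhead : ∑ i ∈ Finset.range n, ((d i : ℝ) / β ^ (i + 1) - (c i : ℝ) / β ^ (i + 1)) = 0 :=
    Finset.sum_eq_zero fun i hi => by rw [hagree i (Finset.mem_range.1 hi), sub_self]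
  calc baseVal β d - baseVal β c
      = ∑' i : ℕ, ((d i : ℝ) / β ^ (i + 1) - (c i : ℝ) / β ^ (i + 1)) :=
        ((hd.summable hβ).tsum_sub (hc.summable hβ)).symm
    _ = ∑' i : ℕ, ((d (i + n) : ℝ) / β ^ (i + n + 1) - (c (i + n) : ℝ) / β ^ (i + n + 1)) := by
        rw [← hsum.sum_add_tsum_nat_add n, hhead, zero_add]
    _ ≤ ∑' i : ℕ, D / β ^ (i + n + 1) := by
        refine ((summable_nat_add_iff n).2 hsum).tsum_le_tsum (fun i => ?_) htail.summable
        have := hd.cast_le (i + n)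
        have := hc.cast_nonneg (i + n)
        rw [← sub_div]
        gcongr
        linarith
    _ = D / (β - 1) * β⁻¹ ^ n := htail.tsum_eq

lemma inv_sub_inv_le_baseVal_sub {x y : ℝ} (hc : IsDigitSeq D c) (hx : 0 < x) (hxy : x ≤ y)
    (hy : 1 < y) (hc0 : 1 ≤ c 0) (hsum : Summable fun i : ℕ => (c i : ℝ) / x ^ (i + 1)) :
    x⁻¹ - y⁻¹ ≤ baseVal x c - baseVal y c := by
  have hterm : ∀ i : ℕ, (0 : ℝ) ≤ (c i : ℝ) / x ^ (i + 1) - (c i : ℝ) / y ^ (i + 1) := fun i => by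
    have := hc.cast_nonneg i
    rw [sub_nonneg]
    gcongr
  have hc0' : (1 : ℝ) ≤ c 0 := by exact_mod_cast hc0
  have hinv : y⁻¹ ≤ x⁻¹ := by gcongr
  calc x⁻¹ - y⁻¹ ≤ (c 0 : ℝ) / x ^ (0 + 1) - (c 0 : ℝ) / y ^ (0 + 1) := by
        simp only [zero_add, pow_one, div_eq_mul_inv]
        nlinarith
    _ ≤ ∑' i : ℕ, ((c i : ℝ) / x ^ (i + 1) - (c i : ℝ) / y ^ (i + 1)) :=
        (hsum.sub (hc.summable hy)).le_tsum 0 fun i _ => hterm i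
    _ = baseVal x c - baseVal y c := hsum.tsum_sub (hc.summable hy)

/- The left base may be `x = 1`, where `1 0^∞` has value one. -/
lemma base_sub_le_of_agree {x y δ : ℝ} {n : ℕ} (hc : IsDigitSeq D c) (hd : IsDigitSeq D d)
    (hδ : 0 < δ) (hx : 1 ≤ x) (hxy : x ≤ y) (hy : 1 + δ ≤ y) (hc0 : 1 ≤ c 0)
    (hsum : Summable fun i : ℕ => (c i : ℝ) / x ^ (i + 1)) (hagree : ∀ i < n, c i = d i)
    (hvx : baseVal x c = 1) (hvy : baseVal y d = 1) :
    y - x ≤ (D + 1) ^ 2 * (D / δ) * (1 + δ)⁻¹ ^ n := by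
  have hy1 : 1 < y := by linarith
  have hD : (0 : ℝ) ≤ D := (hc.cast_nonneg 0).trans (hc.cast_le 0)
  have hyD : y ≤ D + 1 := hd.base_le_add_one hy1 hvy
  have hinv : x⁻¹ - y⁻¹ ≤ D / δ * (1 + δ)⁻¹ ^ n := calc
    x⁻¹ - y⁻¹ ≤ baseVal y d - baseVal y c := by
        simpa only [hvx, hvy] using inv_sub_inv_le_baseVal_sub hc (by linarith) hxy hy1 hc0 hsum
    _ ≤ D / (y - 1) * y⁻¹ ^ n := hc.baseVal_sub_le_of_agree hd hy1 hagree
    _ ≤ D / δ * (1 + δ)⁻¹ ^ n := by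
        gcongr
        linarith
  calc y - x = x * y * (x⁻¹ - y⁻¹) := by field_simp
    _ ≤ x * y * (D / δ * (1 + δ)⁻¹ ^ n) := by gcongr
    _ ≤ (D + 1) * (D + 1) * (D / δ * (1 + δ)⁻¹ ^ n) := by gcongr; linarith
    _ = (D + 1) ^ 2 * (D / δ) * (1 + δ)⁻¹ ^ n := by ring

lemma continuousOn_baseVal (hc : IsDigitSeq D c) {b : ℝ} (hb : 1 < b) :
    ContinuousOn (fun β => baseVal β c) (Ici b) := by
  refine continuousOn_tsum (u := fun i => (c i : ℝ) / b ^ (i + 1)) (fun i => ?_)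
    (hc.summable hb) fun i x (hx : b ≤ x) => ?_
  · refine continuousOn_const.div (by fun_prop) fun x (hx : b ≤ x) => ?_
    have : 0 < x := by linarith
    positivity
  · have : 0 < x := by linarith
    have := hc.cast_nonneg i
    rw [Real.norm_of_nonneg (by positivity)]
    gcongr

end IsDigitSeq

lemma exists_one_lt_inv_add_inv_pow (j : ℕ) :
    ∃ b : ℝ, 1 < b ∧ b < 2 ∧ 1 < b⁻¹ + (b ^ j)⁻¹ := by
  have hcont : ContinuousAt (fun b : ℝ => b⁻¹ + (b ^ j)⁻¹) 1 :=
    (continuousAt_id.inv₀ one_ne_zero).add (ContinuousAt.inv₀ (by fun_prop) (by simp))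
  have hval : ∀ᶠ b : ℝ in 𝓝[>] 1, 1 < b⁻¹ + (b ^ j)⁻¹ :=
    (hcont.eventually (lt_mem_nhds (by norm_num))).filter_mono nhdsWithin_le_nhds
  have htwo : ∀ᶠ b : ℝ in 𝓝[>] 1, b < 2 :=
    (gt_mem_nhds one_lt_two).filter_mono nhdsWithin_le_nhds
  obtain ⟨b, hb, hb2, hb1⟩ := (hval.and (htwo.and self_mem_nhdsWithin)).exists
  exact ⟨b, hb1, hb2, hb⟩

lemma IsDigitSeq.exists_baseVal_eq_one {D : ℤ} {c : ℕ → ℤ} {j : ℕ} (hc : IsDigitSeq D c)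
    (hc0 : 1 ≤ c 0) (hj : j ≠ 0) (hcj : 1 ≤ c j) : ∃ β : ℝ, 1 < β ∧ baseVal β c = 1 := by
  obtain ⟨b, hb1, hb2, hb⟩ := exists_one_lt_inv_add_inv_pow (j + 1)
  have hc0' : (1 : ℝ) ≤ c 0 := by exact_mod_cast hc0
  have hcj' : (1 : ℝ) ≤ c j := by exact_mod_cast hcj
  have hD : (1 : ℝ) ≤ D := hc0'.trans (hc.cast_le 0)
  have hlow : 1 ≤ baseVal b c := calc
    1 ≤ 1 / b ^ (0 + 1) + 1 / b ^ (j + 1) := by simpa using hb.le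
    _ ≤ (c 0 : ℝ) / b ^ (0 + 1) + (c j : ℝ) / b ^ (j + 1) := by gcongr
    _ = ∑ i ∈ {0, j}, (c i : ℝ) / b ^ (i + 1) := by rw [Finset.sum_pair hj.symm]
    _ ≤ baseVal b c := hc.sum_le_baseVal hb1 {0, j}
  have hhigh : baseVal (D + 1) c ≤ 1 := by
    have := hc.baseVal_le (β := D + 1) (by linarith)
    rwa [add_sub_cancel_right, div_self (by linarith)] at this
  obtain ⟨β, hβ, hv⟩ := intermediate_value_Icc' (by linarith : b ≤ D + 1)
    ((hc.continuousOn_baseVal hb1).mono Icc_subset_Ici_self) ⟨hhigh, hlow⟩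
  exact ⟨β, hb1.trans_le hβ.1, hv⟩

/-! ### Covers of small size -/

lemma coverNum_le_card {E : Set ℝ} {ε : ℝ} {F : Finset ℝ} (h : E ⊆ ⋃ x ∈ F, Metric.ball x ε) :
    coverNum E ε ≤ F.card :=
  sInf_le ⟨F, rfl, h⟩

lemma tendsto_pow_mul_rpow_zero {K ν s : ℝ} (k : ℕ) (hK : 0 ≤ K) (hν0 : 0 < ν) (hν1 : ν < 1)
    (hs : 0 < s) : Tendsto (fun N : ℕ => (N : ℝ) ^ k * (K * ν ^ N) ^ s) atTop (𝓝 0) := by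
  have h := (tendsto_pow_const_mul_const_pow_of_lt_one k (Real.rpow_pos_of_pos hν0 s).le
    (Real.rpow_lt_one hν0.le hν1 hs)).const_mul (K ^ s)
  rw [mul_zero] at h
  refine h.congr fun N => ?_
  rw [Real.mul_rpow hK (by positivity), ← Real.rpow_natCast_mul hν0.le, mul_comm (N : ℝ) s,
    Real.rpow_mul_natCast hν0.le]
  ring

lemma eventually_pow_le_rpow_neg {K ν s : ℝ} (k : ℕ) (hK : 0 < K) (hν0 : 0 < ν) (hν1 : ν < 1)
    (hs : 0 < s) : ∀ᶠ N : ℕ in atTop, ((N : ℝ) + 2) ^ k ≤ (K * ν ^ N) ^ (-s) := by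
  have h := (tendsto_add_atTop_iff_nat 2).2
    (tendsto_pow_mul_rpow_zero (K := K / ν ^ 2) k (by positivity) hν0 hν1 hs)
  filter_upwards [h.eventually (gt_mem_nhds one_pos)] with N hN
  rw [pow_add, div_mul_eq_mul_div, mul_div_assoc, mul_div_cancel_right₀ _ (by positivity)] at hN
  rw [Real.rpow_neg (by positivity), ← one_div, le_div_iff₀ (by positivity)]
  exact_mod_cast hN.le

lemma hasBoxDimZero_of_card_le_pow {E : Set ℝ} {K ν : ℝ} (k : ℕ) (hK : 0 < K) (hν0 : 0 < ν)
    (hν1 : ν < 1) (h : ∀ N : ℕ, ∃ F : Finset ℝ, F.card ≤ (N + 1) ^ k ∧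
      E ⊆ ⋃ x ∈ F, Metric.ball x (K * ν ^ N)) : HasBoxDimZero E := by
  intro s hs
  obtain ⟨N₀, hN₀⟩ := eventually_atTop.1 (eventually_pow_le_rpow_neg k hK hν0 hν1 hs)
  have hsmall : ∀ᶠ ε : ℝ in 𝓝[>] 0, ε < K * ν ^ (N₀ + 1) :=
    (gt_mem_nhds (by positivity)).filter_mono nhdsWithin_le_nhds
  filter_upwards [hsmall, self_mem_nhdsWithin] with ε hε hε0
  replace hε0 : 0 < ε := hε0
  have hεK : ε / K ≤ 1 := (div_le_one hK).2
    (hε.le.trans (mul_le_of_le_one_right hK.le (pow_le_one₀ hν0.le hν1.le)))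
  obtain ⟨N, hN, hN'⟩ := exists_nat_pow_near_of_lt_one (div_pos hε0 hK) hεK hν0 hν1
  rw [lt_div_iff₀' hK] at hN
  rw [div_le_iff₀' hK] at hN'
  have hN₀N : N₀ < N + 1 := by
    have hpow := lt_of_mul_lt_mul_left (hN.trans hε) hK.le
    have := (pow_lt_pow_iff_right_of_lt_one₀ hν0 hν1).1 hpow
    omega
  obtain ⟨F, hcard, hcov⟩ := h (N + 1)
  have hcover : E ⊆ ⋃ x ∈ F, Metric.ball x ε :=
    hcov.trans (iUnion₂_mono fun x _ => Metric.ball_subset_ball hN.le)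
  calc coverNum E ε ≤ (F.card : ENNReal) := coverNum_le_card hcover
    _ = ENNReal.ofReal F.card := (ENNReal.ofReal_natCast _).symm
    _ ≤ ENNReal.ofReal (ε ^ (-s)) := ENNReal.ofReal_le_ofReal ?_
  calc (F.card : ℝ) ≤ ((N : ℝ) + 2) ^ k := by
        have : (F.card : ℝ) ≤ ((N + 1 + 1 : ℕ) : ℝ) ^ k := by exact_mod_cast hcard
        convert this using 2
        push_cast
        ring
    _ ≤ (K * ν ^ N) ^ (-s) := hN₀ N (by omega)
    _ ≤ ε ^ (-s) := Real.rpow_le_rpow_of_nonpos hε0 hN' (by linarith)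

/-! ### Shifts and the lexicographic order on sequences -/

section Sequences

variable {α : Type*}

/-- The `n`-fold left shift; unlike `shiftn`, for sequences over any alphabet. -/
def shift (n : ℕ) (x : ℕ → α) : ℕ → α := fun i => x (i + n)

/-- The sequence `d c₀ c₁ …`. -/
def consSeq (d : α) (c : ℕ → α) : ℕ → α
  | 0 => d
  | i + 1 => c i

lemma shift_shift (a b : ℕ) (x : ℕ → α) : shift a (shift b x) = shift (a + b) x := by
  ext i
  simp only [shift, add_assoc]

lemma shift_eq_self_iff {n : ℕ} {x : ℕ → α} : shift n x = x ↔ Function.Periodic x n :=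
  funext_iff

lemma periodic_shift {m : ℕ} {x : ℕ → α} (h : Function.Periodic x m) (k : ℕ) :
    Function.Periodic (shift k x) m := fun i => by
  simp only [shift, add_right_comm i m k, h (i + k)]

lemma consSeq_succ (d : α) (c : ℕ → α) (i : ℕ) : consSeq d c (i + 1) = c i := rfl

lemma shift_one_consSeq (d : α) (c : ℕ → α) : shift 1 (consSeq d c) = c := rfl

lemma shift_eq_consSeq (n : ℕ) (x : ℕ → α) : shift n x = consSeq (x n) (shift (n + 1) x) := by
  ext i
  rcases i with _ | i
  · simp only [shift, consSeq, zero_add]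
  · simp only [shift, consSeq, add_right_comm i 1 n, add_assoc]

lemma consSeq_eq_shift {q : ℕ} {x : ℕ → α} (hq : 0 < q) (hx : Function.Periodic x q) :
    consSeq (x (q - 1)) x = shift (q - 1) x := by
  rw [shift_eq_consSeq, Nat.sub_add_cancel hq, shift_eq_self_iff.2 hx]

variable [LinearOrder α]

lemma toLex_lt_iff {x y : ℕ → α} :
    toLex x < toLex y ↔ ∃ i, (∀ j < i, x j = y j) ∧ x i < y i := Iff.rfl

lemma apply_zero_le_of_toLex_le {x y : ℕ → α} (h : toLex x ≤ toLex y) : x 0 ≤ y 0 := by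
  rcases h.eq_or_lt with h | ⟨_ | i, hagree, hlt⟩
  · rw [toLex_inj.1 h]
  · exact le_of_lt hlt
  · exact le_of_eq (hagree 0 i.succ_pos)

lemma toLex_shift_le {x y : ℕ → α} {n : ℕ} (h : toLex x ≤ toLex y) (hagree : ∀ i < n, x i = y i) :
    toLex (shift n x) ≤ toLex (shift n y) := by
  rcases h.eq_or_lt with h | ⟨i, hi, hlt⟩
  · rw [toLex_inj.1 h]
  · have hni : n ≤ i := not_lt.1 fun hin => hlt.ne (hagree i hin)
    refine le_of_lt (toLex_lt_iff.2 ⟨i - n, fun j hj => hi (j + n) (by omega), ?_⟩)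
    change x (i - n + n) < y (i - n + n)
    rwa [Nat.sub_add_cancel hni]

lemma toLex_consSeq_le (d : α) {x y : ℕ → α} (h : toLex x ≤ toLex y) :
    toLex (consSeq d x) ≤ toLex (consSeq d y) := by
  rcases h.eq_or_lt with h | ⟨i, hi, hlt⟩
  · rw [toLex_inj.1 h]
  · refine le_of_lt (toLex_lt_iff.2 ⟨i + 1, fun j hj => ?_, hlt⟩)
    rcases j with _ | j
    · rfl
    · exact hi j (by omega)

lemma toLex_comp_le_of_strictMono {β : Type*} [LinearOrder β] {f : α → β} (hf : StrictMono f)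
    {x y : ℕ → α} (h : toLex x ≤ toLex y) : toLex (f ∘ x) ≤ toLex (f ∘ y) := by
  rcases h.eq_or_lt with h | ⟨i, hi, hlt⟩
  · rw [toLex_inj.1 h]
  · exact le_of_lt (toLex_lt_iff.2 ⟨i, fun j hj => congrArg f (hi j hj), hf hlt⟩)

lemma toLex_comp_le_of_strictAnti {β : Type*} [LinearOrder β] {f : α → β} (hf : StrictAnti f)
    {x y : ℕ → α} (h : toLex x ≤ toLex y) : toLex (f ∘ y) ≤ toLex (f ∘ x) := by
  rcases h.eq_or_lt with h | ⟨i, hi, hlt⟩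
  · rw [toLex_inj.1 h]
  · exact le_of_lt (toLex_lt_iff.2 ⟨i, fun j hj => congrArg f (hi j hj).symm, hf hlt⟩)

/-- The first `n` letters of `x` form a word that is lexicographically at most the word formed by
the first `n` letters of `y`. -/
def PrefixLE (n : ℕ) (x y : ℕ → α) : Prop :=
  (∃ i < n, (∀ j < i, x j = y j) ∧ x i < y i) ∨ ∀ i < n, x i = y i

namespace PrefixLE

variable {k l n : ℕ} {x x' y z : ℕ → α}

lemma of_toLex_le (h : toLex x ≤ toLex y) (n : ℕ) : PrefixLE n x y := by
  rcases h.eq_or_lt with h | ⟨i, hi, hlt⟩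
  · exact Or.inr fun i _ => congrFun (toLex_inj.1 h) i
  · by_cases hin : i < n
    · exact Or.inl ⟨i, hin, hi, hlt⟩
    · exact Or.inr fun j hj => hi j (by omega)

lemma congr_left (h : PrefixLE n x y) (hx : ∀ i < n, x' i = x i) : PrefixLE n x' y := by
  rcases h with ⟨i, hin, hi, hlt⟩ | heq
  · exact Or.inl
      ⟨i, hin, fun j hj => (hx j (hj.trans hin)).trans (hi j hj), (hx i hin).trans_lt hlt⟩
  · exact Or.inr fun i hi => (hx i hi).trans (heq i hi)

lemma append (h : PrefixLE k x y) (h' : PrefixLE l (shift k x) (shift k y)) :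
    PrefixLE (k + l) x y := by
  rcases h with ⟨i, hik, hi, hlt⟩ | heq
  · exact Or.inl ⟨i, by omega, hi, hlt⟩
  have agree_of_shift {j : ℕ} (hj : ∀ i < j, shift k x i = shift k y i) :
      ∀ i < j + k, x i = y i := fun i hi => by
    rcases lt_or_ge i k with hik | hki
    · exact heq i hik
    · simpa only [shift, Nat.sub_add_cancel hki] using hj (i - k) (by omega)
  rcases h' with ⟨i, hil, hi, hlt⟩ | heq'
  · exact Or.inl ⟨i + k, by omega, agree_of_shift hi, hlt⟩
  · rw [add_comm]
    exact Or.inr (agree_of_shift heq')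

lemma toLex_lt (h : PrefixLE (n + 1) x y) (hz : ∀ i < n, z i = y i) (hzn : y n < z n) :
    toLex x < toLex z := by
  rcases h with ⟨i, hin, hi, hlt⟩ | heq
  · refine toLex_lt_iff.2 ⟨i, fun j hj => ?_, hlt.trans_le ?_⟩
    · rw [hz j (by omega), hi j hj]
    · rcases (Nat.lt_succ_iff.1 hin).lt_or_eq with hin | rfl
      · exact (hz i hin).ge
      · exact hzn.le
  · exact toLex_lt_iff.2 ⟨n, fun j hj => by rw [hz j hj, heq j (by omega)],
      (heq n n.lt_succ_self).trans_lt hzn⟩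

lemma of_lt_add_one {x x' y : ℕ → ℤ} (h : ∃ i < n + 1, (∀ j < i, x j = y j) ∧ x i < y i)
    (hx : ∀ i < n, x' i = x i) (hxn : x' n = x n + 1) : PrefixLE (n + 1) x' y := by
  obtain ⟨i, hin, hi, hlt⟩ := h
  have hagree : ∀ j < i, x' j = y j := fun j hj => by rw [hx j (by omega), hi j hj]
  rcases (Nat.lt_succ_iff.1 hin).lt_or_eq with hin' | rfl
  · exact Or.inl ⟨i, hin, hagree, by rwa [hx i hin']⟩
  · rcases (Int.add_one_le_iff.2 hlt).lt_or_eq with hlt' | heq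
    · exact Or.inl ⟨i, hin, hagree, by rwa [hxn]⟩
    · refine Or.inr fun j hj => ?_
      rcases (Nat.lt_succ_iff.1 hj).lt_or_eq with hji | rfl
      · exact hagree j hji
      · rw [hxn, heq]

end PrefixLE

/-! ### Extremal points of a periodic shift orbit -/

lemma eq_of_shift_max {X Y Y' : ℕ → α} {k k' : ℕ} (hY : Y = shift k X) (hY' : Y' = shift k' X)
    (hmax : ∀ n, toLex (shift n X) ≤ toLex Y) (hmax' : ∀ n, toLex (shift n X) ≤ toLex Y') :
    Y = Y' :=
  toLex_inj.1 (le_antisymm (by simpa only [hY] using hmax' k) (by simpa only [hY'] using hmax k'))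

/-- `X` and `Y` are the lexicographic minimum and maximum of a shift orbit with least period `m`.
If `X = w^∞` for a Lyndon word `w`, then `Y = L(w)^∞`. -/
structure ExtremalPair (m : ℕ) (X Y : ℕ → α) : Prop where
  pos : 0 < m
  periodic : Function.Periodic X m
  exists_max_eq_shift : ∃ k, Y = shift k X
  min_le_shift : ∀ n, toLex X ≤ toLex (shift n X)
  shift_le_max : ∀ n, toLex (shift n X) ≤ toLex Y
  period_dvd : ∀ n, Function.Periodic X n → m ∣ n

namespace ExtremalPair

variable {m : ℕ} {X Y : ℕ → α}

lemma periodic_max (h : ExtremalPair m X Y) : Function.Periodic Y m := by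
  obtain ⟨k, rfl⟩ := h.exists_max_eq_shift
  exact periodic_shift h.periodic k

lemma exists_min_eq_shift (h : ExtremalPair m X Y) : ∃ k, X = shift k Y := by
  obtain ⟨k, rfl⟩ := h.exists_max_eq_shift
  refine ⟨k * m - k, ?_⟩
  rw [shift_shift, Nat.sub_add_cancel (Nat.le_mul_of_pos_right k h.pos)]
  exact (shift_eq_self_iff.2 (h.periodic.nat_mul k)).symm

lemma min_le_shift_max (h : ExtremalPair m X Y) (n : ℕ) : toLex X ≤ toLex (shift n Y) := by
  obtain ⟨k, rfl⟩ := h.exists_max_eq_shift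
  simpa only [shift_shift] using h.min_le_shift (n + k)

lemma shift_max_le_max (h : ExtremalPair m X Y) (n : ℕ) : toLex (shift n Y) ≤ toLex Y := by
  obtain ⟨k, hk⟩ := h.exists_max_eq_shift
  conv_lhs => rw [hk, shift_shift]
  exact h.shift_le_max (n + k)

lemma period_max_dvd (h : ExtremalPair m X Y) {n : ℕ} (hn : Function.Periodic Y n) : m ∣ n := by
  obtain ⟨k, rfl⟩ := h.exists_min_eq_shift
  exact h.period_dvd n (periodic_shift hn k)

lemma comp_strictMono {β : Type*} [LinearOrder β] {f : α → β} (h : ExtremalPair m X Y)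
    (hf : StrictMono f) : ExtremalPair m (f ∘ X) (f ∘ Y) where
  pos := h.pos
  periodic := h.periodic.comp f
  exists_max_eq_shift := h.exists_max_eq_shift.imp fun k hk => by rw [hk]; rfl
  min_le_shift n := toLex_comp_le_of_strictMono hf (h.min_le_shift n)
  shift_le_max n := toLex_comp_le_of_strictMono hf (h.shift_le_max n)
  period_dvd n hn := h.period_dvd n fun i => hf.injective (hn i)

lemma comp_strictAnti {β : Type*} [LinearOrder β] {f : α → β} (h : ExtremalPair m X Y)
    (hf : StrictAnti f) : ExtremalPair m (f ∘ Y) (f ∘ X) where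
  pos := h.pos
  periodic := h.periodic_max.comp f
  exists_max_eq_shift := h.exists_min_eq_shift.imp fun k hk => by rw [hk]; rfl
  min_le_shift n := toLex_comp_le_of_strictAnti hf (h.shift_max_le_max n)
  shift_le_max n := toLex_comp_le_of_strictAnti hf (h.min_le_shift_max n)
  period_dvd n hn := h.period_max_dvd fun i => hf.injective (hn i)

/-- The first `m` letters of the orbit maximum form an unbordered word. -/
lemma exists_shift_max_lt (h : ExtremalPair m X Y) {j : ℕ} (hj : 0 < j) (hjm : j < m) :
    ∃ i < m - j, (∀ l < i, shift j Y l = Y l) ∧ shift j Y i < Y i := by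
  refine (PrefixLE.of_toLex_le (h.shift_max_le_max j) (m - j)).resolve_right fun hborder => ?_
  have hle := toLex_shift_le (h.shift_max_le_max j) hborder
  rw [shift_shift, Nat.sub_add_cancel hjm.le, shift_eq_self_iff.2 h.periodic_max] at hle
  have hper : Function.Periodic Y (m - j) :=
    shift_eq_self_iff.1 (toLex_inj.1 (le_antisymm (h.shift_max_le_max (m - j)) hle))
  have := Nat.le_of_dvd (by omega) (h.period_max_dvd hper)
  omega

end ExtremalPair

end Sequences

/-! ### Block substitutions -/

/-- Sequences over `{0,1}`. -/
def IsBinary (ρ : ℕ → ℤ) : Prop := ∀ i, ρ i = 0 ∨ ρ i = 1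

namespace IsBinary

variable {ρ : ℕ → ℤ}

lemma shift (h : IsBinary ρ) (n : ℕ) : IsBinary (shift n ρ) := fun i => h (i + n)

lemma one_sub (h : IsBinary ρ) : IsBinary fun i => 1 - ρ i := fun i =>
  (h i).symm.imp (fun hi => sub_eq_zero.2 hi.symm) fun hi => sub_eq_self.2 hi

lemma consSeq (h : IsBinary ρ) {d : ℤ} (hd : d = 0 ∨ d = 1) : IsBinary (consSeq d ρ)
  | 0 => hd
  | i + 1 => h i

lemma const_zero : IsBinary fun _ => 0 := fun _ => Or.inl rfl

lemma const_one : IsBinary fun _ => 1 := fun _ => Or.inr rfl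

end IsBinary

/-- The sequential form of the substitution `Φ_s`, with `X = s^∞` and `Y = L(s)^∞`.  Each letter
`ρ i` of the binary sequence `ρ` emits the first `m` letters of `Y` (if `ρ i = 0`) or of `X` (if
`ρ i = 1`), the last one changed by `ρ (i + 1) - ρ i`.  So the block of `Φ_s` for a digit `d` after
a digit `p` is emitted by the letter `p`, and `Φ_s(r)` is obtained from `ρ = p r` where `p` is the
complement of the first digit of `r`. -/
def blockSeq (m : ℕ) (X Y ρ : ℕ → ℤ) : ℕ → ℤ := fun n =>
  (if ρ (n / m) = 0 then Y (n % m) else X (n % m)) +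
    if n % m = m - 1 then ρ (n / m + 1) - ρ (n / m) else 0

section BlockSeq

variable {m q : ℕ} {X Y ρ ρ' : ℕ → ℤ}

lemma blockSeq_apply (X Y ρ : ℕ → ℤ) (i : ℕ) {t : ℕ} (ht : t < m) :
    blockSeq m X Y ρ (m * i + t) =
      (if ρ i = 0 then Y t else X t) + if t = m - 1 then ρ (i + 1) - ρ i else 0 := by
  have hdiv : (m * i + t) / m = i := by
    rw [Nat.mul_add_div (by omega), Nat.div_eq_of_lt ht, add_zero]
  have hmod : (m * i + t) % m = t := by
    rw [Nat.mul_add_mod, Nat.mod_eq_of_lt ht]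
  simp only [blockSeq, hdiv, hmod]

lemma blockSeq_apply_lt (X Y ρ : ℕ → ℤ) {t : ℕ} (ht : t < m) :
    blockSeq m X Y ρ t =
      (if ρ 0 = 0 then Y t else X t) + if t = m - 1 then ρ 1 - ρ 0 else 0 := by
  simpa using blockSeq_apply X Y ρ 0 ht

lemma shift_blockSeq (hm : 0 < m) (X Y ρ : ℕ → ℤ) (i : ℕ) :
    shift (m * i) (blockSeq m X Y ρ) = blockSeq m X Y (shift i ρ) := by
  ext n
  have hdiv : (n + m * i) / m = n / m + i := Nat.add_mul_div_left n i hm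
  simp only [shift, blockSeq, hdiv, Nat.add_mul_mod_self_left, add_right_comm]
  rfl

lemma periodic_blockSeq (hm : 0 < m) (X Y : ℕ → ℤ) (hρ : Function.Periodic ρ q) :
    Function.Periodic (blockSeq m X Y ρ) (m * q) := by
  rw [← shift_eq_self_iff, shift_blockSeq hm, shift_eq_self_iff.2 hρ]

/-- This symmetry turns upper bounds for the shifts of a block sequence into lower bounds. -/
lemma blockSeq_neg (X Y : ℕ → ℤ) (hρ : IsBinary ρ) :
    blockSeq m (-Y) (-X) (fun i => 1 - ρ i) = -blockSeq m X Y ρ := by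
  ext n
  simp only [blockSeq, Pi.neg_apply]
  rcases hρ (n / m) with h | h <;> simp only [h] <;> split_ifs <;> omega

lemma toLex_blockSeq_lt (hm : 0 < m) (X Y : ℕ → ℤ) (h0 : ρ 0 = ρ' 0)
    (hlt : toLex ρ < toLex ρ') : toLex (blockSeq m X Y ρ) < toLex (blockSeq m X Y ρ') := by
  obtain ⟨_ | l, hagree, hl⟩ := toLex_lt_iff.1 hlt
  · exact absurd h0 hl.ne
  refine toLex_lt_iff.2 ⟨m * l + (m - 1), fun n hn => ?_, ?_⟩
  · have hdm := Nat.div_add_mod n m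
    have hdiv : n / m ≤ l := by
      rw [← Nat.lt_succ_iff, Nat.div_lt_iff_lt_mul hm, Nat.succ_mul, Nat.mul_comm l m]
      omega
    rcases hdiv.eq_or_lt with rfl | hlt
    · have hmod : n % m ≠ m - 1 := by omega
      simp only [blockSeq, if_neg hmod, hagree (n / m) (by omega)]
    · simp only [blockSeq, hagree (n / m) (by omega), hagree (n / m + 1) (by omega)]
  · rw [blockSeq_apply _ _ _ _ (by omega), blockSeq_apply _ _ _ _ (by omega),
      hagree l (by omega)]
    simpa using hl

lemma shift_blockSeq_apply_lt {j i : ℕ} (X Y ρ : ℕ → ℤ) (hi : i + j < m) :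
    shift j (blockSeq m X Y ρ) i =
      (if ρ 0 = 0 then Y (i + j) else X (i + j)) + if i + j = m - 1 then ρ 1 - ρ 0 else 0 :=
  blockSeq_apply_lt X Y ρ hi

lemma shift_blockSeq_apply_ge {j i : ℕ} (X Y ρ : ℕ → ℤ) (hj : j < m) (hi : i < m)
    (hij : m ≤ i + j) : shift j (blockSeq m X Y ρ) i =
      if ρ 1 = 0 then Y (i + j - m) else X (i + j - m) := by
  have h := blockSeq_apply X Y ρ 1 (show i + j - m < m by omega)
  rwa [if_neg (show i + j - m ≠ m - 1 by omega), add_zero, mul_one, Nat.add_sub_cancel' hij] at h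

namespace ExtremalPair

/-- A suffix of `Y₀⋯Yₘ₋₁` is strictly smaller than the prefix of the same length, so
incrementing its last letter keeps it at most that prefix; if equality results, the comparison is
decided by `X ≼ σ^{m-j} Y`. -/
lemma prefixLE_shift_blockSeq_zero_one (h : ExtremalPair m X Y) (h0 : ρ 0 = 0) (h1 : ρ 1 = 1)
    {j : ℕ} (hj : 0 < j) (hjm : j < m) : PrefixLE m (shift j (blockSeq m X Y ρ)) Y := by
  obtain ⟨n, hn⟩ : ∃ n, m = n + 1 + j := ⟨m - j - 1, by omega⟩
  have hsuffix : PrefixLE (n + 1) (shift j (blockSeq m X Y ρ)) Y := by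
    refine PrefixLE.of_lt_add_one (x := shift j Y) ?_ (fun i hi => ?_) ?_
    · simpa only [show m - j = n + 1 by omega] using h.exists_shift_max_lt hj hjm
    · rw [shift_blockSeq_apply_lt _ _ _ (by omega), if_pos h0, if_neg (by omega), add_zero]
      rfl
    · rw [shift_blockSeq_apply_lt _ _ _ (by omega), if_pos h0, if_pos (by omega), h0, h1]
      rfl
  have hprefix : PrefixLE j (shift (n + 1) (shift j (blockSeq m X Y ρ))) (shift (n + 1) Y) := by
    refine (PrefixLE.of_toLex_le (h.min_le_shift_max (n + 1)) j).congr_left fun i hi => ?_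
    change shift j (blockSeq m X Y ρ) (i + (n + 1)) = X i
    rw [shift_blockSeq_apply_ge _ _ _ hjm (by omega) (by omega), if_neg (by omega),
      show i + (n + 1) + j - m = i by omega]
  simpa only [← hn] using hsuffix.append hprefix

lemma prefixLE_shift_blockSeq_of_eq (h : ExtremalPair m X Y) (hρ : ρ 0 = ρ 1) {j : ℕ}
    (hjm : j < m) : PrefixLE m (shift j (blockSeq m X Y ρ)) Y := by
  obtain ⟨Z, hZ, hper, hle⟩ : ∃ Z : ℕ → ℤ, (∀ t, (if ρ 1 = 0 then Y t else X t) = Z t) ∧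
      Function.Periodic Z m ∧ toLex (shift j Z) ≤ toLex Y := by
    by_cases h1 : ρ 1 = 0
    · exact ⟨Y, fun t => if_pos h1, h.periodic_max, h.shift_max_le_max j⟩
    · exact ⟨X, fun t => if_neg h1, h.periodic, h.shift_le_max j⟩
  refine (PrefixLE.of_toLex_le hle m).congr_left fun i hi => ?_
  rcases lt_or_ge (i + j) m with hij | hij
  · rw [shift_blockSeq_apply_lt _ _ _ hij, hρ, sub_self, ite_self, add_zero, hZ, shift]
  · rw [shift_blockSeq_apply_ge _ _ _ hjm hi hij, hZ, shift, ← hper, Nat.sub_add_cancel hij]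

lemma prefixLE_shift_blockSeq_one_zero (h : ExtremalPair m X Y) (h0 : ρ 0 = 1) (h1 : ρ 1 = 0)
    {j : ℕ} (hjm : j < m) : PrefixLE m (shift j (blockSeq m X Y ρ)) Y := by
  have hlt : toLex (shift j (blockSeq m X Y ρ)) < toLex (shift j X) := by
    refine toLex_lt_iff.2 ⟨m - 1 - j, fun i hi => ?_, ?_⟩
    · rw [shift_blockSeq_apply_lt _ _ _ (by omega), if_neg (by omega), if_neg (by omega),
        add_zero, shift]
    · rw [shift_blockSeq_apply_lt _ _ _ (by omega), if_neg (by omega), if_pos (by omega), shift]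
      omega
  exact PrefixLE.of_toLex_le (hlt.le.trans (h.shift_le_max j)) m

lemma toLex_shift_blockSeq_lt (h : ExtremalPair m X Y) (hρ : IsBinary ρ) (h0' : ρ' 0 = 0)
    (h1' : ρ' 1 = 1) {j : ℕ} (hjm : j < m) (hj : 0 < j ∨ ¬(ρ 0 = 0 ∧ ρ 1 = 1)) :
    toLex (shift j (blockSeq m X Y ρ)) < toLex (blockSeq m X Y ρ') := by
  have hprefix : PrefixLE (m - 1 + 1) (shift j (blockSeq m X Y ρ)) Y := by
    rw [Nat.sub_add_cancel h.pos]
    rcases hρ 0 with h0 | h0 <;> rcases hρ 1 with h1 | h1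
    · exact h.prefixLE_shift_blockSeq_of_eq (h0.trans h1.symm) hjm
    · exact h.prefixLE_shift_blockSeq_zero_one h0 h1 (hj.resolve_right (· ⟨h0, h1⟩)) hjm
    · exact h.prefixLE_shift_blockSeq_one_zero h0 h1 hjm
    · exact h.prefixLE_shift_blockSeq_of_eq (h0.trans h1.symm) hjm
  refine hprefix.toLex_lt (fun i hi => ?_) ?_
  · rw [blockSeq_apply_lt _ _ _ (by omega), if_pos h0', if_neg (by omega), add_zero]
  · rw [blockSeq_apply_lt _ _ _ (by omega), if_pos h0', if_pos rfl, h0', h1']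
    omega

variable {R B : ℕ → ℤ}

lemma toLex_shift_blockSeq_lt_or (h : ExtremalPair m X Y) (hρ : IsBinary ρ) (hB0 : B 0 = 1)
    (hmax : ∀ i, toLex (shift i ρ) ≤ toLex B) (n : ℕ) :
    toLex (shift n (blockSeq m X Y ρ)) < toLex (blockSeq m X Y (consSeq 0 B)) ∨
      ∃ i, n = m * i ∧ shift i ρ = consSeq 0 B := by
  obtain ⟨i, j, hjm, rfl⟩ : ∃ i j, j < m ∧ n = j + m * i :=
    ⟨n / m, n % m, Nat.mod_lt n h.pos, (Nat.mod_add_div n m).symm⟩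
  rw [← shift_shift, shift_blockSeq h.pos]
  by_cases hwindow : 0 < j ∨ ¬(shift i ρ 0 = 0 ∧ shift i ρ 1 = 1)
  · exact Or.inl (h.toLex_shift_blockSeq_lt (hρ.shift i) (ρ' := consSeq 0 B) rfl hB0 hjm hwindow)
  · obtain ⟨rfl, h0, -⟩ : j = 0 ∧ shift i ρ 0 = 0 ∧ shift i ρ 1 = 1 := by
      simpa only [not_or, not_lt, Nat.le_zero, not_not] using hwindow
    have hle : toLex (shift i ρ) ≤ toLex (consSeq 0 B) := by
      rw [shift_eq_consSeq, show ρ i = 0 by simpa only [shift, zero_add] using h0]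
      exact toLex_consSeq_le 0 (hmax (i + 1))
    exact hle.lt_or_eq.imp (toLex_blockSeq_lt h.pos X Y h0)
      fun heq => ⟨i, zero_add _, toLex_inj.1 heq⟩

lemma toLex_shift_blockSeq_le (h : ExtremalPair m X Y) (hρ : IsBinary ρ) (hB0 : B 0 = 1)
    (hmax : ∀ i, toLex (shift i ρ) ≤ toLex B) (n : ℕ) :
    toLex (shift n (blockSeq m X Y ρ)) ≤ toLex (blockSeq m X Y (consSeq 0 B)) := by
  rcases h.toLex_shift_blockSeq_lt_or hρ hB0 hmax n with hlt | ⟨i, rfl, heq⟩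
  · exact hlt.le
  · rw [shift_blockSeq h.pos, heq]

lemma toLex_le_shift_blockSeq (h : ExtremalPair m X Y) (hρ : IsBinary ρ) (hR : IsBinary R)
    (hR0 : R 0 = 0) (hmin : ∀ i, toLex R ≤ toLex (shift i ρ)) (n : ℕ) :
    toLex (blockSeq m X Y (consSeq 1 R)) ≤ toLex (shift n (blockSeq m X Y ρ)) := by
  have hanti : StrictAnti fun d : ℤ => 1 - d := fun a b hab => by dsimp only; omega
  have hneg : StrictAnti fun d : ℤ => -d := fun a b hab => neg_lt_neg hab
  have hcons : consSeq 0 (fun i => 1 - R i) = fun i => 1 - consSeq 1 R i := by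
    ext (_ | i) <;> rfl
  have hle := (h.comp_strictAnti hneg).toLex_shift_blockSeq_le hρ.one_sub
    (B := fun i => 1 - R i) (by rw [hR0, sub_zero])
    (fun i => toLex_comp_le_of_strictAnti hanti (hmin i)) n
  change toLex (shift n (blockSeq m (-Y) (-X) _)) ≤ toLex (blockSeq m (-Y) (-X) _) at hle
  rw [hcons, blockSeq_neg X Y hρ, blockSeq_neg X Y (hR.consSeq (Or.inr rfl))] at hle
  have hle' := toLex_comp_le_of_strictAnti hneg hle
  have neg_neg_comp (c : ℕ → ℤ) : (fun d : ℤ => -d) ∘ (-c) = c := neg_neg c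
  rw [neg_neg_comp] at hle'
  exact (neg_neg_comp (shift n (blockSeq m X Y ρ))) ▸ hle'

lemma blockSeq (h : ExtremalPair m X Y) (h' : ExtremalPair q R B) (hR : IsBinary R)
    (hR0 : R 0 = 0) (hRlast : R (q - 1) = 1) (hB0 : B 0 = 1) (hBlast : B (q - 1) = 0) :
    ExtremalPair (m * q) (blockSeq m X Y (consSeq 1 R)) (blockSeq m X Y (consSeq 0 B)) := by
  have hR' : consSeq 1 R = shift (q - 1) R := by
    rw [← consSeq_eq_shift h'.pos h'.periodic, hRlast]
  have hB' : consSeq 0 B = shift (q - 1) B := by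
    rw [← consSeq_eq_shift h'.pos h'.periodic_max, hBlast]
  have hbin : IsBinary (consSeq 1 R) := hR.consSeq (Or.inr rfl)
  obtain ⟨k, hk⟩ : ∃ k, consSeq 0 B = shift k (consSeq 1 R) := by
    obtain ⟨k, hk⟩ := h'.exists_max_eq_shift
    exact ⟨q - 1 + (k + 1), by rw [hB', hk, ← shift_shift, ← shift_shift k, shift_one_consSeq]⟩
  refine ⟨Nat.mul_pos h.pos h'.pos, periodic_blockSeq h.pos X Y ?_,
    ⟨m * k, by rw [shift_blockSeq h.pos, hk]⟩,
    h.toLex_le_shift_blockSeq hbin hR hR0 fun i => ?_,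
    h.toLex_shift_blockSeq_le hbin hB0 fun i => ?_, fun n hn => ?_⟩
  · rw [hR']
    exact periodic_shift h'.periodic _
  · rw [hR', shift_shift]
    exact h'.min_le_shift _
  · rw [hR', shift_shift]
    exact h'.shift_le_max _
  · have hper : Function.Periodic (_root_.blockSeq m X Y (consSeq 0 B)) n := by
      rw [hk, ← shift_blockSeq h.pos]
      exact periodic_shift hn _
    have hmax : ∀ i, toLex (shift i (consSeq 0 B)) ≤ toLex B := fun i => by
      rw [hB', shift_shift]
      exact h'.shift_max_le_max _
    have hbin0 : IsBinary (consSeq 0 B) := by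
      rw [hk]
      exact hbin.shift k
    rcases h.toLex_shift_blockSeq_lt_or hbin0 hB0 hmax n with hlt | ⟨i, rfl, hi⟩
    · rw [shift_eq_self_iff.2 hper] at hlt
      exact absurd hlt (lt_irrefl _)
    · refine Nat.mul_dvd_mul_left m (h'.period_max_dvd ?_)
      exact periodic_shift (shift_eq_self_iff.1 hi) 1

end ExtremalPair

lemma consSeq_blockSeq_apply (hρ : IsBinary ρ) (hRlast : R (q - 1) = 1) (hBlast : B (q - 1) = 0)
    (i : ℕ) {k : ℕ} (hk : k < q) : consSeq (ρ 0) (blockSeq q R B ρ) (q * i + k) =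
      if ρ i = 0 then consSeq 0 B k else consSeq 1 R k := by
  rcases k with _ | k
  · rcases i with _ | i
    · rcases hρ 0 with h | h <;> simp [consSeq, h]
    · rw [show q * (i + 1) + 0 = q * i + (q - 1) + 1 by rw [Nat.mul_succ]; omega, consSeq_succ,
        blockSeq_apply _ _ _ _ (by omega), if_pos rfl, hRlast, hBlast]
      rcases hρ i with h | h <;> rcases hρ (i + 1) with h' | h' <;> simp [consSeq, h, h']
  · simp only [consSeq_succ, ← add_assoc]
    rw [blockSeq_apply _ _ _ _ (by omega), if_neg (show k ≠ q - 1 by omega), add_zero]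

/-- The associativity `(s • r) • r' = s • (r • r')`. -/
lemma blockSeq_blockSeq (hm : 0 < m) (hq : 0 < q) (X Y : ℕ → ℤ) (hρ : IsBinary ρ)
    (hRlast : R (q - 1) = 1) (hBlast : B (q - 1) = 0) :
    blockSeq (m * q) (blockSeq m X Y (consSeq 1 R)) (blockSeq m X Y (consSeq 0 B)) ρ =
      blockSeq m X Y (consSeq (ρ 0) (blockSeq q R B ρ)) := by
  have happly := consSeq_blockSeq_apply hρ hRlast hBlast
  ext n
  obtain ⟨i, k, u, hk, hu, rfl⟩ : ∃ i k u, k < q ∧ u < m ∧ n = m * (q * i + k) + u :=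
    ⟨n / m / q, n / m % q, n % m, Nat.mod_lt _ hq, Nat.mod_lt _ hm, by
      rw [Nat.div_add_mod, Nat.div_add_mod]⟩
  have hmk : m * k + m ≤ m * q := by
    rw [← Nat.mul_succ]
    exact Nat.mul_le_mul_left m hk
  have hindex : m * (q * i + k) + u = m * q * i + (m * k + u) := by ring
  rw [blockSeq_apply _ _ _ _ hu, happly i hk, hindex, blockSeq_apply _ _ _ _ (by omega),
    blockSeq_apply _ _ _ _ hu, blockSeq_apply _ _ _ _ hu]
  rcases eq_or_ne u (m - 1) with rfl | hu'
  · rcases eq_or_ne k (q - 1) with rfl | hk'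
    · have hlast : m * (q - 1) + (m - 1) = m * q - 1 := by
        rw [Nat.mul_sub_one] at hmk ⊢
        omega
      have hnext : consSeq (ρ 0) (blockSeq q R B ρ) (q * i + (q - 1) + 1) = ρ (i + 1) := by
        rw [show q * i + (q - 1) + 1 = q * (i + 1) + 0 by rw [Nat.mul_succ]; omega,
          happly (i + 1) hq]
        rcases hρ (i + 1) with h | h <;> simp [consSeq, h]
      rw [hnext, if_pos hlast]
      rcases hρ i with h | h <;> simp only [h, consSeq_succ, hRlast, hBlast] <;>
        simp only [if_true, one_ne_zero, if_false] <;> ring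
    · have hlast : m * k + (m - 1) ≠ m * q - 1 := fun heq => by
        have : m * (k + 1) < m * q := Nat.mul_lt_mul_of_pos_left (by omega) hm
        rw [Nat.mul_succ] at this
        omega
      rw [if_neg hlast, add_assoc, happly i (by omega)]
      rcases hρ i with h | h <;> simp [h]
  · have hlast : m * k + u ≠ m * q - 1 := by omega
    rw [if_neg hlast, if_neg hu', if_neg hu', if_neg hu']
    rcases hρ i with h | h <;> simp [h]

end BlockSeq

/-! ### Periodic sequences of words -/

/-- The sequence `w^∞`, with integer digits. -/
def intPerSeq (w : List ℕ) : ℕ → ℤ := fun i => perSeq w i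

section IntPerSeq

variable {w : List ℕ}

lemma intPerSeq_of_lt {i : ℕ} (hi : i < w.length) : intPerSeq w i = (w.getD i 0 : ℤ) := by
  simp [intPerSeq, perSeq, Nat.mod_eq_of_lt hi]

lemma intPerSeq_mod (w : List ℕ) (i : ℕ) : intPerSeq w (i % w.length) = intPerSeq w i := by
  simp [intPerSeq, perSeq]

lemma intPerSeq_nonneg (w : List ℕ) (i : ℕ) : 0 ≤ intPerSeq w i := Int.natCast_nonneg _

lemma periodic_intPerSeq (w : List ℕ) : Function.Periodic (intPerSeq w) w.length := fun i => by
  rw [← intPerSeq_mod, Nat.add_mod_right, intPerSeq_mod]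

lemma intPerSeq_eq_of_periodic {c : ℕ → ℤ} (hw : w ≠ []) (hc : Function.Periodic c w.length)
    (h : ∀ i < w.length, (w.getD i 0 : ℤ) = c i) : intPerSeq w = c := by
  ext i
  have hi : i % w.length < w.length := Nat.mod_lt _ (List.length_pos_iff.2 hw)
  rw [← intPerSeq_mod, intPerSeq_of_lt hi, h _ hi, hc.map_mod_nat]

lemma intPerSeq_rotate (w : List ℕ) (k : ℕ) : intPerSeq (w.rotate k) = shift k (intPerSeq w) := by
  rcases eq_or_ne w [] with rfl | hw
  · ext i
    simp [intPerSeq, perSeq, shift]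
  refine intPerSeq_eq_of_periodic (by simpa using hw) ?_ fun i hi => ?_
  · rw [List.length_rotate]
    exact periodic_shift (periodic_intPerSeq w) k
  · rw [List.length_rotate] at hi
    have hmod : (i + k) % w.length < w.length := Nat.mod_lt _ (List.length_pos_iff.2 hw)
    rw [shift, ← intPerSeq_mod, intPerSeq_of_lt hmod]
    simp [List.getD_eq_getElem?_getD, hi, hmod]

lemma toLex_intPerSeq_le {u v : List ℕ} (hlength : u.length = v.length) (h : u ≤ v) :
    toLex (intPerSeq u) ≤ toLex (intPerSeq v) := by
  rcases h.eq_or_lt with rfl | hlt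
  · exact le_rfl
  rcases List.lt_iff_exists.1 hlt with ⟨_, hlt'⟩ | ⟨i, hiu, hiv, hagree, hi⟩
  · omega
  refine le_of_lt (toLex_lt_iff.2 ⟨i, fun j hj => ?_, ?_⟩)
  · rw [intPerSeq_of_lt (hj.trans hiu), intPerSeq_of_lt (hj.trans hiv),
      List.getD_eq_getElem _ _ (hj.trans hiu), List.getD_eq_getElem _ _ (hj.trans hiv),
      hagree j hj]
  · rw [intPerSeq_of_lt hiu, intPerSeq_of_lt hiv, List.getD_eq_getElem _ _ hiu,
      List.getD_eq_getElem _ _ hiv]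
    exact_mod_cast hi

lemma maxCyc_eq_max (w : List ℕ) : maxCyc w =
    ([] :: (List.range w.length).map w.rotate).max (List.cons_ne_nil _ _) := rfl

lemma rotate_le_maxCyc (w : List ℕ) (k : ℕ) : w.rotate k ≤ maxCyc w := by
  rw [maxCyc_eq_max]
  refine List.le_max_of_mem ?_
  rcases eq_or_ne w [] with rfl | hw
  · simp
  · rw [← List.rotate_mod]
    exact List.mem_cons_of_mem _ (List.mem_map_of_mem
      (List.mem_range.2 (Nat.mod_lt _ (List.length_pos_iff.2 hw))))

lemma exists_maxCyc_eq_rotate (w : List ℕ) : ∃ k, maxCyc w = w.rotate k := by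
  rcases List.mem_cons.1 (maxCyc_eq_max w ▸ List.max_mem (List.cons_ne_nil _ _)) with h | h
  · have hle := h ▸ rotate_le_maxCyc w 0
    rw [List.rotate_zero] at hle
    have hw : w = [] := hle.eq_or_lt.resolve_right (List.not_lt_nil _)
    exact ⟨0, by rw [h, hw, List.rotate_zero]⟩
  · obtain ⟨k, -, hk⟩ := List.mem_map.1 h
    exact ⟨k, hk.symm⟩

lemma length_maxCyc (w : List ℕ) : (maxCyc w).length = w.length := by
  obtain ⟨k, hk⟩ := exists_maxCyc_eq_rotate w
  rw [hk, List.length_rotate]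

lemma ExtremalPair.intPerSeq_maxCyc {m : ℕ} {Y : ℕ → ℤ} (h : ExtremalPair m (intPerSeq w) Y) :
    intPerSeq (maxCyc w) = Y := by
  obtain ⟨k, hk⟩ := exists_maxCyc_eq_rotate w
  obtain ⟨l, hl⟩ := h.exists_max_eq_shift
  refine eq_of_shift_max (k := k) (by rw [hk, intPerSeq_rotate]) hl (fun n => ?_) h.shift_le_max
  rw [← intPerSeq_rotate]
  exact toLex_intPerSeq_le (by rw [List.length_rotate, length_maxCyc]) (rotate_le_maxCyc w n)

lemma getD_dropLast_append (f : ℕ → ℕ) {i : ℕ} (hi : i < w.length) :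
    (w.dropLast ++ [f w.getLast!]).getD i 0 =
      if i = w.length - 1 then f (w.getD i 0) else w.getD i 0 := by
  split_ifs with h
  · have hlast : w.getLast! = w.getD i 0 := by
      rw [List.getLast!_eq_getLast?_getD, List.getLast?_eq_getElem?, h,
        List.getD_eq_getElem?_getD]
      rfl
    rw [hlast, List.getD_eq_getElem?_getD, List.getElem?_append_right (by simp [h])]
    simp [h]
  · have hi' : i < w.length - 1 := by omega
    rw [List.getD_append _ _ _ _ (by rwa [List.length_dropLast]), List.getD_eq_getElem?_getD,
      List.getElem?_dropLast, if_pos hi', List.getD_eq_getElem?_getD]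

lemma getD_wplus {i : ℕ} (hi : i < w.length) :
    ((wplus w).getD i 0 : ℤ) = intPerSeq w i + if i = w.length - 1 then 1 else 0 := by
  rw [wplus, getD_dropLast_append (· + 1) hi, intPerSeq_of_lt hi]
  split_ifs <;> simp

lemma getD_wminus (hlast : 1 ≤ intPerSeq w (w.length - 1)) {i : ℕ} (hi : i < w.length) :
    ((wminus w).getD i 0 : ℤ) = intPerSeq w i + if i = w.length - 1 then -1 else 0 := by
  rw [wminus, getD_dropLast_append (· - 1) hi, intPerSeq_of_lt hi]
  split_ifs with h
  · rw [← h, intPerSeq_of_lt hi] at hlast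
    omega
  · simp

lemma length_dropLast_append_singleton (hw : w ≠ []) (a : ℕ) :
    (w.dropLast ++ [a]).length = w.length := by
  rw [List.length_append, List.length_dropLast, List.length_singleton]
  exact Nat.sub_add_cancel (List.length_pos_iff.2 hw)

end IntPerSeq

/-! ### Admissible words and their substitutions -/

/-- The words to which the substitutions are applied: primitive words, minimal among their
rotations, whose last letter can be decremented. -/
structure IsAdmissible (S : List ℕ) : Prop where
  extremalPair : ExtremalPair S.length (intPerSeq S) (intPerSeq (maxCyc S))
  one_le_last : 1 ≤ intPerSeq S (S.length - 1)

/-- Binary admissible words of length at least two; the conditions on `L(r)` are recorded as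
fields because they are what the composition of substitutions needs. -/
structure IsBinaryAdmissible (r : List ℕ) : Prop extends IsAdmissible r where
  isBinary : IsBinary (intPerSeq r)
  first_eq_zero : intPerSeq r 0 = 0
  max_first_eq_one : intPerSeq (maxCyc r) 0 = 1
  max_last_eq_zero : intPerSeq (maxCyc r) (r.length - 1) = 0

/-- The largest digit of an admissible word, as the first digit of `L(S)`. -/
def maxDigit (S : List ℕ) : ℤ := intPerSeq (maxCyc S) 0

/-- The sequential form of `Φ_S`: the concatenation of the blocks of `Φ_S` for the digits
`ρ 1, ρ 2, …` after the digit `ρ 0`. -/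
def codeSeq (S : List ℕ) (ρ : ℕ → ℤ) : ℕ → ℤ :=
  blockSeq S.length (intPerSeq S) (intPerSeq (maxCyc S)) ρ

/-- The sequence `L(S)⁺ S^∞`. -/
def upperSeq (S : List ℕ) : ℕ → ℤ := codeSeq S (consSeq 0 fun _ => 1)

lemma IsBinaryAdmissible.last_eq_one {r : List ℕ} (hr : IsBinaryAdmissible r) :
    intPerSeq r (r.length - 1) = 1 := by
  have := hr.one_le_last
  rcases hr.isBinary (r.length - 1) with h | h <;> omega

lemma isBinary_upper : IsBinary (consSeq 0 fun _ => 1) := IsBinary.const_one.consSeq (Or.inl rfl)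

lemma isBinary_star : IsBinary (consSeq 0 (consSeq 1 fun _ => 0)) :=
  (IsBinary.const_zero.consSeq (Or.inr rfl)).consSeq (Or.inl rfl)

lemma codeSeq_congr {S : List ℕ} {ρ ρ' : ℕ → ℤ} {n : ℕ} (h0 : ρ 0 = ρ' 0)
    (h : ∀ i < n, ρ (i + 1) = ρ' (i + 1)) : ∀ i < n, codeSeq S ρ i = codeSeq S ρ' i := by
  intro i hi
  have hdiv : i / S.length ≤ i := Nat.div_le_self _ _
  have hhead : ρ (i / S.length) = ρ' (i / S.length) := by
    rcases hk : i / S.length with _ | k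
    · exact h0
    · exact h k (by omega)
  simp only [codeSeq, blockSeq, h _ (hdiv.trans_lt hi), hhead]

lemma codeSeq_const_zero (S : List ℕ) : codeSeq S (fun _ => 0) = intPerSeq (maxCyc S) := by
  ext n
  simp only [codeSeq, blockSeq, if_true, sub_self, ite_self, add_zero]
  rw [← length_maxCyc, intPerSeq_mod]

lemma codeSeq_const_one (S : List ℕ) : codeSeq S (fun _ => 1) = intPerSeq S := by
  ext n
  simp only [codeSeq, blockSeq, one_ne_zero, if_false, sub_self, ite_self, add_zero]
  exact intPerSeq_mod S n

lemma shift_codeSeq {S : List ℕ} (hS : S ≠ []) (ρ : ℕ → ℤ) (i : ℕ) :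
    shift (S.length * i) (codeSeq S ρ) = codeSeq S (shift i ρ) :=
  shift_blockSeq (List.length_pos_iff.2 hS) _ _ ρ i

lemma upperSeq_apply {S : List ℕ} (hS : S ≠ []) (n : ℕ) : upperSeq S n =
    if n < S.length then intPerSeq (maxCyc S) n + (if n = S.length - 1 then 1 else 0)
    else intPerSeq S n := by
  split_ifs with hn hlast
  · rw [upperSeq, codeSeq, blockSeq_apply_lt _ _ _ hn]
    simp [consSeq, hlast]
  · rw [upperSeq, codeSeq, blockSeq_apply_lt _ _ _ hn]
    simp [consSeq, hlast]
  · have hshift := congrFun (shift_codeSeq hS (consSeq 0 fun _ => 1) 1) (n - S.length)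
    rw [mul_one, shift_one_consSeq, codeSeq_const_one, shift, Nat.sub_add_cancel (by omega)]
      at hshift
    rw [upperSeq, hshift, ← periodic_intPerSeq, Nat.sub_add_cancel (by omega)]

namespace IsAdmissible

variable {S r : List ℕ} {ρ : ℕ → ℤ}

lemma length_pos (h : IsAdmissible S) : 0 < S.length := h.extremalPair.pos

lemma ne_nil (h : IsAdmissible S) : S ≠ [] := List.length_pos_iff.1 h.length_pos

lemma le_maxDigit (h : IsAdmissible S) (i : ℕ) : intPerSeq S i ≤ maxDigit S := by
  have hle := apply_zero_le_of_toLex_le (h.extremalPair.shift_le_max i)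
  rwa [shift, zero_add] at hle

lemma isDigitSeq_maxCyc (h : IsAdmissible S) :
    IsDigitSeq (maxDigit S) (intPerSeq (maxCyc S)) := fun i => by
  have hle := apply_zero_le_of_toLex_le (h.extremalPair.shift_max_le_max i)
  rw [shift, zero_add] at hle
  exact ⟨intPerSeq_nonneg _ i, hle⟩

lemma one_le_maxDigit (h : IsAdmissible S) : 1 ≤ maxDigit S :=
  h.one_le_last.trans (h.le_maxDigit _)

lemma isDigitSeq_codeSeq (h : IsAdmissible S) (hρ : IsBinary ρ) :
    IsDigitSeq (maxDigit S + 1) (codeSeq S ρ) := fun n => by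
  have hlast := h.one_le_last
  have hX := intPerSeq_nonneg S (n % S.length)
  have hXle := h.le_maxDigit (n % S.length)
  obtain ⟨hY, hYle⟩ := h.isDigitSeq_maxCyc (n % S.length)
  simp only [codeSeq, blockSeq, mem_Icc]
  rcases eq_or_ne (n % S.length) (S.length - 1) with hn | hn
  · rw [← hn] at hlast
    rcases hρ (n / S.length) with h0 | h0 <;> rcases hρ (n / S.length + 1) with h1 | h1 <;>
      rw [h0, h1, if_pos hn] <;> simp only [if_true, one_ne_zero, if_false] <;> omega
  · rw [if_neg hn]
    split_ifs <;> omega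

lemma one_le_codeSeq (h : IsAdmissible S) (hρ : IsBinary ρ) {i : ℕ} (hi : ρ i = 0) :
    1 ≤ codeSeq S ρ (S.length * i) := by
  have happly := blockSeq_apply (intPerSeq S) (intPerSeq (maxCyc S)) ρ i h.length_pos
  rw [add_zero, if_pos hi, hi] at happly
  have hY : 1 ≤ intPerSeq (maxCyc S) 0 := h.one_le_maxDigit
  rw [codeSeq, happly]
  rcases hρ (i + 1) with h1 | h1 <;> rw [h1] <;> split_ifs <;> omega

/-! ### The substitution on words and on sequences -/

lemma length_phiBlock (h : IsAdmissible S) (p d : ℕ) : (phiBlock S p d).length = S.length := by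
  have hmax : maxCyc S ≠ [] := by
    rw [← List.length_pos_iff, length_maxCyc]
    exact h.length_pos
  unfold phiBlock
  split_ifs
  · exact length_maxCyc S
  · exact length_dropLast_append_singleton h.ne_nil _
  · exact (length_dropLast_append_singleton hmax _).trans (length_maxCyc S)
  · rfl

lemma getD_phiBlock (h : IsAdmissible S) (hρ : IsBinary ρ) {p d : ℕ} (hp : ρ 0 = p) (hd : ρ 1 = d)
    {t : ℕ} (ht : t < S.length) : ((phiBlock S p d).getD t 0 : ℤ) = codeSeq S ρ t := by
  have ht' : t < (maxCyc S).length := by rwa [length_maxCyc]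
  have hplus := getD_wplus ht'
  rw [length_maxCyc] at hplus
  rw [codeSeq, blockSeq_apply_lt _ _ _ ht, hp, hd]
  obtain rfl | rfl : p = 0 ∨ p = 1 := by have := hρ 0; omega
  all_goals obtain rfl | rfl : d = 0 ∨ d = 1 := by have := hρ 1; omega
  · simp [phiBlock, intPerSeq_of_lt ht']
  · simpa [phiBlock] using hplus
  · simpa [phiBlock] using getD_wminus h.one_le_last ht
  · simp [phiBlock, intPerSeq_of_lt ht]

lemma length_phiAux (h : IsAdmissible S) (p : ℕ) (r : List ℕ) :
    (phiAux S p r).length = S.length * r.length := by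
  induction r generalizing p with
  | nil => rfl
  | cons d r ih =>
    rw [phiAux, List.length_append, h.length_phiBlock, ih, List.length_cons]
    ring

lemma getD_phiAux (h : IsAdmissible S) (hρ : IsBinary ρ) {p : ℕ} (hp : ρ 0 = p)
    (hr : ∀ i < r.length, ρ (i + 1) = (r.getD i 0 : ℤ)) {n : ℕ} (hn : n < S.length * r.length) :
    ((phiAux S p r).getD n 0 : ℤ) = codeSeq S ρ n := by
  induction r generalizing p ρ n with
  | nil => simp at hn
  | cons d r ih =>
    have hd : ρ 1 = d := by simpa using hr 0 (by simp)
    rw [phiAux]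
    rcases lt_or_ge n S.length with hlt | hge
    · rw [List.getD_append _ _ _ _ (by rwa [h.length_phiBlock]), h.getD_phiBlock hρ hp hd hlt]
    · rw [List.length_cons, Nat.mul_succ] at hn
      have htail := ih (hρ.shift 1) (p := d) hd (fun i hi => hr (i + 1) (by simpa using hi))
        (n := n - S.length) (by omega)
      rw [List.getD_append_right _ _ _ _ (by rwa [h.length_phiBlock]), h.length_phiBlock, htail,
        ← shift_codeSeq h.ne_nil, mul_one, shift, Nat.sub_add_cancel hge]

lemma wordSeq_phiAux (h : IsAdmissible S) (hρ : IsBinary ρ) {p : ℕ} (hp : ρ 0 = p)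
    (hr : ∀ i < r.length, ρ (i + 1) = (r.getD i 0 : ℤ)) {c : ℕ → ℕ}
    (hc : (fun i => (c i : ℤ)) = codeSeq S (shift r.length ρ)) :
    (fun i => (wordSeq (phiAux S p r) c i : ℤ)) = codeSeq S ρ := by
  ext n
  rw [wordSeq, h.length_phiAux]
  split_ifs with hn
  · exact h.getD_phiAux hρ hp hr hn
  · rw [congrFun hc, ← shift_codeSeq h.ne_nil, shift, Nat.sub_add_cancel (by omega)]

lemma wordSeq_upper (h : IsAdmissible S) :
    (fun i => (wordSeq (wplus (maxCyc S)) (perSeq S) i : ℤ)) = upperSeq S := by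
  have hword : wplus (maxCyc S) = phiAux S 0 [1] := by simp [phiAux, phiBlock]
  rw [hword]
  exact h.wordSeq_phiAux isBinary_upper rfl (by simp [consSeq]) (codeSeq_const_one S).symm

lemma wordSeq_star (h : IsAdmissible S) :
    (fun i => (wordSeq (wplus (maxCyc S) ++ wminus S) (perSeq (maxCyc S)) i : ℤ)) =
      codeSeq S (consSeq 0 (consSeq 1 fun _ => 0)) := by
  have hword : wplus (maxCyc S) ++ wminus S = phiAux S 0 [1, 0] := by simp [phiAux, phiBlock]
  rw [hword]
  refine h.wordSeq_phiAux isBinary_star rfl (fun i hi => ?_) (codeSeq_const_zero S).symm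
  rcases i with _ | _ | i
  · rfl
  · rfl
  · simp only [List.length_cons, List.length_nil] at hi
    omega

end IsAdmissible

lemma IsBinaryAdmissible.subst_eq_phiAux {r : List ℕ} (hr : IsBinaryAdmissible r) (S : List ℕ) :
    subst S r = phiAux S 1 r := by
  rcases r with _ | ⟨d, r⟩
  · rfl
  · have hd := hr.first_eq_zero
    rw [intPerSeq_of_lt (by simp)] at hd
    obtain rfl : d = 0 := by simpa using hd
    rfl

namespace IsAdmissible

variable {S r : List ℕ} {ρ : ℕ → ℤ}

lemma length_subst (h : IsAdmissible S) (hr : IsBinaryAdmissible r) :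
    (subst S r).length = S.length * r.length := by
  rw [hr.subst_eq_phiAux, h.length_phiAux]

lemma extremalPair_codeSeq (h : IsAdmissible S) (hr : IsBinaryAdmissible r) :
    ExtremalPair (S.length * r.length) (codeSeq S (consSeq 1 (intPerSeq r)))
      (codeSeq S (consSeq 0 (intPerSeq (maxCyc r)))) :=
  h.extremalPair.blockSeq hr.extremalPair hr.isBinary hr.first_eq_zero hr.last_eq_one
    hr.max_first_eq_one hr.max_last_eq_zero

lemma intPerSeq_subst (h : IsAdmissible S) (hr : IsBinaryAdmissible r) :
    intPerSeq (subst S r) = codeSeq S (consSeq 1 (intPerSeq r)) := by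
  have hpair := h.extremalPair_codeSeq hr
  refine intPerSeq_eq_of_periodic ?_ ?_ fun i hi => ?_
  · rw [← List.length_pos_iff, h.length_subst hr]
    exact hpair.pos
  · rw [h.length_subst hr]
    exact hpair.periodic
  · rw [h.length_subst hr] at hi
    rw [hr.subst_eq_phiAux]
    exact h.getD_phiAux (hr.isBinary.consSeq (Or.inr rfl)) rfl (fun j hj => intPerSeq_of_lt hj) hi

lemma extremalPair_subst (h : IsAdmissible S) (hr : IsBinaryAdmissible r) :
    ExtremalPair (subst S r).length (intPerSeq (subst S r))
      (codeSeq S (consSeq 0 (intPerSeq (maxCyc r)))) := by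
  rw [h.length_subst hr, h.intPerSeq_subst hr]
  exact h.extremalPair_codeSeq hr

lemma intPerSeq_maxCyc_subst (h : IsAdmissible S) (hr : IsBinaryAdmissible r) :
    intPerSeq (maxCyc (subst S r)) = codeSeq S (consSeq 0 (intPerSeq (maxCyc r))) :=
  (h.extremalPair_subst hr).intPerSeq_maxCyc

lemma codeSeq_subst (h : IsAdmissible S) (hr : IsBinaryAdmissible r) (hρ : IsBinary ρ) :
    codeSeq (subst S r) ρ = codeSeq S (consSeq (ρ 0) (codeSeq r ρ)) := by
  rw [codeSeq, h.length_subst hr, h.intPerSeq_subst hr, h.intPerSeq_maxCyc_subst hr]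
  exact blockSeq_blockSeq h.length_pos hr.length_pos _ _ hρ hr.last_eq_one hr.max_last_eq_zero

lemma upperSeq_subst (h : IsAdmissible S) (hr : IsBinaryAdmissible r) :
    upperSeq (subst S r) = codeSeq S (consSeq 0 (upperSeq r)) :=
  h.codeSeq_subst hr isBinary_upper

lemma isAdmissible_subst (h : IsAdmissible S) (hr : IsBinaryAdmissible r) :
    IsAdmissible (subst S r) where
  extremalPair := by
    rw [h.intPerSeq_maxCyc_subst hr]
    exact h.extremalPair_subst hr
  one_le_last := by
    have hindex : S.length * r.length - 1 = S.length * (r.length - 1) + (S.length - 1) := by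
      have := Nat.mul_le_mul_left S.length hr.length_pos
      have := h.length_pos
      rw [Nat.mul_sub_one]
      omega
    have hlast : consSeq 1 (intPerSeq r) (r.length - 1 + 1) = 1 := hr.last_eq_one
    have hX := h.one_le_last
    have hY := intPerSeq_nonneg (maxCyc S) (S.length - 1)
    rw [h.length_subst hr, h.intPerSeq_subst hr, hindex, codeSeq,
      blockSeq_apply _ _ _ _ (Nat.sub_one_lt h.length_pos.ne'), if_pos rfl, hlast]
    rcases hr.isBinary.consSeq (Or.inr rfl : (1 : ℤ) = 0 ∨ (1 : ℤ) = 1) (r.length - 1) with hp | hp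
      <;> rw [hp] <;> simp only [if_true, one_ne_zero, if_false] <;> omega

lemma maxDigit_le_maxDigit_subst (h : IsAdmissible S) (hr : IsBinaryAdmissible r) :
    maxDigit S ≤ maxDigit (subst S r) := by
  have hfirst : consSeq 0 (intPerSeq (maxCyc r)) 1 = 1 := hr.max_first_eq_one
  rw [maxDigit, maxDigit, h.intPerSeq_maxCyc_subst hr, codeSeq,
    blockSeq_apply_lt _ _ _ h.length_pos, hfirst, if_pos (by rfl)]
  refine le_add_of_nonneg_right ?_
  split_ifs <;> simp [consSeq]

/-! ### The endpoints of the intervals `J^S` and `I^S` -/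

lemma exists_baseVal_codeSeq_eq_one (h : IsAdmissible S) (hρ : IsBinary ρ) (h0 : ρ 0 = 0) :
    ∃ β, 1 < β ∧ baseVal β (codeSeq S ρ) = 1 := by
  obtain ⟨j, hj, hcj⟩ : ∃ j ≠ 0, 1 ≤ codeSeq S ρ j := by
    have hm := h.length_pos
    rcases hρ 1 with h1 | h1
    · exact ⟨S.length * 1, by omega, h.one_le_codeSeq hρ h1⟩
    rcases hρ 2 with h2 | h2
    · exact ⟨S.length * 2, by omega, h.one_le_codeSeq hρ h2⟩
    · refine ⟨S.length * 1 + (S.length - 1), by omega, ?_⟩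
      rw [codeSeq, blockSeq_apply _ _ _ _ (by omega), h1, h2]
      simpa using h.one_le_last
  exact (h.isDigitSeq_codeSeq hρ).exists_baseVal_eq_one (h.one_le_codeSeq hρ h0) hj hcj

lemma epsilon_spec (h : IsAdmissible S) (hρ : IsBinary ρ) (h0 : ρ 0 = 0) {c : ℕ → ℕ}
    (hc : (fun i => (c i : ℤ)) = codeSeq S ρ) :
    1 < Classical.epsilon (fun β : ℝ => 1 < β ∧ valSeq β c = 1) ∧
      baseVal (Classical.epsilon fun β : ℝ => 1 < β ∧ valSeq β c = 1) (codeSeq S ρ) = 1 := by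
  have hval (β : ℝ) : valSeq β c = baseVal β (codeSeq S ρ) := by rw [valSeq_eq_baseVal, hc]
  simp only [hval]
  exact Classical.epsilon_spec (h.exists_baseVal_codeSeq_eq_one hρ h0)

lemma betaL_spec (h : IsAdmissible S) :
    1 < betaL S ∧ baseVal (betaL S) (intPerSeq (maxCyc S)) = 1 := by
  rw [← codeSeq_const_zero]
  exact h.epsilon_spec IsBinary.const_zero rfl (codeSeq_const_zero S).symm

lemma betaR_spec (h : IsAdmissible S) : 1 < betaR S ∧ baseVal (betaR S) (upperSeq S) = 1 :=
  h.epsilon_spec isBinary_upper rfl h.wordSeq_upper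

lemma betaStar_spec (h : IsAdmissible S) : 1 < betaStar S ∧
    baseVal (betaStar S) (codeSeq S (consSeq 0 (consSeq 1 fun _ => 0))) = 1 :=
  h.epsilon_spec isBinary_star rfl h.wordSeq_star

end IsAdmissible

/-! ### Christoffel words -/

section Christoffel

open scoped fwdDiff

lemma shift_fwdDiff (n : ℕ) (U : ℕ → ℤ) : shift n (Δ_[1] U) = Δ_[1] (shift n U) := by
  ext i
  simp only [shift, fwdDiff, add_right_comm]

lemma sub_zero_eq_of_fwdDiff_eq {U V : ℕ → ℤ} {n : ℕ} (h : ∀ i < n, Δ_[1] U i = Δ_[1] V i) :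
    U n - U 0 = V n - V 0 := by
  rw [← Finset.sum_range_sub, ← Finset.sum_range_sub]
  exact Finset.sum_congr rfl fun i hi => h i (Finset.mem_range.1 hi)

lemma toLex_fwdDiff_le {U V : ℕ → ℤ} (h : ∀ i, U i - U 0 ≤ V i - V 0) :
    toLex (Δ_[1] U) ≤ toLex (Δ_[1] V) := by
  by_contra hVU
  obtain ⟨i, hagree, hlt⟩ := toLex_lt_iff.1 (not_le.1 hVU)
  have hi := sub_zero_eq_of_fwdDiff_eq hagree
  have hi' := h (i + 1)
  simp only [fwdDiff] at hlt
  omega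

/-- The lower approximations `⌊i p / q⌋` of the line of slope `p / q`. -/
def floorSeq (p q : ℕ) : ℕ → ℤ := fun i => (i * p / q : ℕ)

/-- The upper approximations `⌈i p / q⌉` of the line of slope `p / q`. -/
def ceilSeq (p q : ℕ) : ℕ → ℤ := fun i => (i * p ⌈/⌉ q : ℕ)

/-- The limit of the upper approximations `⌈i x⌉` as the slope `x` decreases to `p / q`. -/
def ceilRightSeq (p q : ℕ) : ℕ → ℤ := fun i => if i = 0 then 0 else 1 + floorSeq p q i

/-- The lower Christoffel word of slope `p / q`, whose letters are the increments of
`⌊i p / q⌋`. -/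
def christoffel (p q : ℕ) : List ℕ :=
  (List.range q).map fun i => (i + 1) * p / q - i * p / q

variable {p q : ℕ}

@[simp] lemma length_christoffel (p q : ℕ) : (christoffel p q).length = q := by
  simp [christoffel]

lemma christoffel_ne_nil (hq : 0 < q) : christoffel p q ≠ [] := by
  rwa [← List.length_pos_iff, length_christoffel]

lemma floorSeq_zero (p q : ℕ) : floorSeq p q 0 = 0 := by simp [floorSeq]

lemma ceilSeq_zero (p q : ℕ) : ceilSeq p q 0 = 0 := by simp [ceilSeq]

lemma ceilRightSeq_zero (p q : ℕ) : ceilRightSeq p q 0 = 0 := if_pos rfl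

lemma ceilRightSeq_of_ne_zero {i : ℕ} (hi : i ≠ 0) : ceilRightSeq p q i = 1 + floorSeq p q i :=
  if_neg hi

lemma floorSeq_add_period (hq : 0 < q) (i : ℕ) : floorSeq p q (i + q) = floorSeq p q i + p := by
  simp only [floorSeq, add_mul, Nat.add_mul_div_left _ _ hq, Nat.cast_add]

lemma floorSeq_period (hq : 0 < q) : floorSeq p q q = p := by
  simp only [floorSeq, Nat.mul_div_cancel_left _ hq]

lemma ceilSeq_period (hq : 0 < q) : ceilSeq p q q = p := by
  simp only [ceilSeq, ← smul_eq_mul, smul_ceilDiv hq]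

lemma floorSeq_one (hpq : p < q) : floorSeq p q 1 = 0 := by
  simp [floorSeq, Nat.div_eq_of_lt hpq]

lemma floorSeq_le_succ (p q i : ℕ) : floorSeq p q i ≤ floorSeq p q (i + 1) :=
  Nat.cast_le.2 (Nat.div_le_div_right (Nat.mul_le_mul_right p i.le_succ))

lemma floorSeq_succ_le (hq : 0 < q) (hpq : p ≤ q) (i : ℕ) :
    floorSeq p q (i + 1) ≤ floorSeq p q i + 1 := by
  have h : (i + 1) * p / q ≤ i * p / q + 1 := by
    rw [← Nat.add_div_right _ hq, add_one_mul]
    exact Nat.div_le_div_right (Nat.add_le_add_left hpq _)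
  simp only [floorSeq]
  exact_mod_cast h

lemma floorSeq_add_le (p q i n : ℕ) : floorSeq p q i + floorSeq p q n ≤ floorSeq p q (i + n) := by
  simp only [floorSeq, add_mul]
  exact_mod_cast Nat.div_add_div_le_add_div

lemma floorSeq_add_le_ceilSeq (hq : 0 < q) (i n : ℕ) :
    floorSeq p q (i + n) ≤ ceilSeq p q i + floorSeq p q n := by
  have hi : i * p ≤ q * (i * p ⌈/⌉ q) := le_smul_ceilDiv hq
  have h : (i + n) * p / q ≤ i * p ⌈/⌉ q + n * p / q := by
    rw [← Nat.mul_add_div hq, add_mul]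
    exact Nat.div_le_div_right (Nat.add_le_add_right hi _)
  simp only [floorSeq, ceilSeq]
  exact_mod_cast h

lemma ceilSeq_eq_one_add_floorSeq {i : ℕ} (hq : 0 < q) (hi : ¬ q ∣ i * p) :
    ceilSeq p q i = 1 + floorSeq p q i := by
  have h : i * p ⌈/⌉ q = 1 + i * p / q := by
    have hmod := Nat.div_add_mod (i * p) q
    have hmod_lt := Nat.mod_lt (i * p) hq
    have := mt Nat.dvd_of_mod_eq_zero hi
    rw [Nat.ceilDiv_eq_add_pred_div, Nat.div_eq_iff hq, add_mul, one_mul, mul_comm _ q]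
    omega
  rw [ceilSeq, floorSeq, h, Nat.cast_add, Nat.cast_one]

lemma isBinary_fwdDiff_floorSeq (hq : 0 < q) (hpq : p ≤ q) :
    IsBinary (Δ_[1] (floorSeq p q)) := fun i => by
  have hle := floorSeq_le_succ p q i
  have hge := floorSeq_succ_le hq hpq i
  simp only [fwdDiff]
  omega

lemma periodic_fwdDiff_floorSeq (hq : 0 < q) :
    Function.Periodic (Δ_[1] (floorSeq p q)) q := fun i => by
  simp only [fwdDiff, add_right_comm i q 1, floorSeq_add_period hq, add_sub_add_right_eq_sub]

lemma getD_christoffel {i : ℕ} (hi : i < q) :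
    ((christoffel p q).getD i 0 : ℤ) = Δ_[1] (floorSeq p q) i := by
  rw [List.getD_eq_getElem _ _ (by simpa using hi)]
  simp only [christoffel, List.getElem_map, List.getElem_range]
  exact Nat.cast_sub (Nat.cast_le.1 (floorSeq_le_succ p q i))

lemma intPerSeq_christoffel (hq : 0 < q) : intPerSeq (christoffel p q) = Δ_[1] (floorSeq p q) :=
  intPerSeq_eq_of_periodic (christoffel_ne_nil hq)
    (by rw [length_christoffel]; exact periodic_fwdDiff_floorSeq hq)
    fun i hi => getD_christoffel (by simpa using hi)

lemma exists_mul_add_one_eq_mul_succ (hq : 0 < q) (hc : p.Coprime q) :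
    ∃ k m, k * p + 1 = q * (m + 1) := by
  obtain ⟨k, hk⟩ := Nat.exists_mul_mod_eq_of_coprime (q - 1) hc hq.ne'
  rw [Nat.mod_eq_of_lt (Nat.sub_one_lt_of_lt hq)] at hk
  have hmod := Nat.div_add_mod (p * k) q
  refine ⟨k, p * k / q, ?_⟩
  rw [mul_comm k, mul_add_one]
  omega

/-- If `k p ≡ -1` modulo `q`, the line started at `k` lies just below an integer, so its lower
approximation is the upper approximation of the line through the origin. -/
lemma ceilSeq_add_eq_floorSeq {k m : ℕ} (hq : 0 < q) (hk : k * p + 1 = q * (m + 1)) (i : ℕ) :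
    ceilSeq p q i + m = floorSeq p q (i + k) := by
  have h : (i + k) * p = i * p + q - 1 + q * m := by
    rw [mul_add_one] at hk
    rw [add_mul]
    omega
  simp only [floorSeq, ceilSeq, Nat.ceilDiv_eq_add_pred_div, h, Nat.add_mul_div_left _ _ hq,
    Nat.cast_add]

lemma fwdDiff_ceilSeq {k m : ℕ} (hq : 0 < q) (hk : k * p + 1 = q * (m + 1)) :
    Δ_[1] (ceilSeq p q) = shift k (Δ_[1] (floorSeq p q)) := by
  rw [shift_fwdDiff]
  ext i
  simp only [fwdDiff, shift, ← ceilSeq_add_eq_floorSeq hq hk, add_sub_add_right_eq_sub]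

lemma dvd_of_periodic_fwdDiff_floorSeq (hq : 0 < q) (hc : p.Coprime q) {n : ℕ}
    (hn : Function.Periodic (Δ_[1] (floorSeq p q)) n) : q ∣ n := by
  obtain ⟨k, m, hk⟩ := exists_mul_add_one_eq_mul_succ hq hc
  rw [mul_add_one] at hk
  have hfloor : (k + n) * p / q = m + n * p / q := by
    have hsum := sub_zero_eq_of_fwdDiff_eq (n := k) fun i _ =>
      congrFun ((shift_fwdDiff n _).symm.trans (shift_eq_self_iff.2 hn)) i
    have hm : k * p / q = m := by
      rw [Nat.div_eq_iff hq, mul_comm m]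
      omega
    simp only [shift, zero_add, floorSeq, zero_mul, Nat.zero_div, hm] at hsum
    omega
  have hmod := Nat.div_add_mod (n * p) q
  have hlt := Nat.lt_mul_div_succ ((k + n) * p) hq
  rw [hfloor, mul_add_one, mul_add, add_mul] at hlt
  exact hc.symm.dvd_of_dvd_mul_right (Nat.dvd_of_mod_eq_zero (by omega))

lemma extremalPair_christoffel (hq : 0 < q) (hc : p.Coprime q) :
    ExtremalPair q (Δ_[1] (floorSeq p q)) (Δ_[1] (ceilSeq p q)) where
  pos := hq
  periodic := periodic_fwdDiff_floorSeq hq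
  exists_max_eq_shift := by
    obtain ⟨k, m, hk⟩ := exists_mul_add_one_eq_mul_succ hq hc
    exact ⟨k, fwdDiff_ceilSeq hq hk⟩
  min_le_shift n := by
    rw [shift_fwdDiff]
    refine toLex_fwdDiff_le fun i => ?_
    have hle := floorSeq_add_le p q i n
    simp only [shift, zero_add, floorSeq_zero]
    omega
  shift_le_max n := by
    rw [shift_fwdDiff]
    refine toLex_fwdDiff_le fun i => ?_
    have hle := floorSeq_add_le_ceilSeq (p := p) hq i n
    simp only [shift, zero_add, ceilSeq_zero]
    omega
  period_dvd _ := dvd_of_periodic_fwdDiff_floorSeq hq hc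

lemma intPerSeq_maxCyc_christoffel (hq : 0 < q) (hc : p.Coprime q) :
    intPerSeq (maxCyc (christoffel p q)) = Δ_[1] (ceilSeq p q) := by
  have h := extremalPair_christoffel hq hc
  rw [← intPerSeq_christoffel hq] at h
  exact h.intPerSeq_maxCyc

lemma isAdmissible_christoffel (hp : 0 < p) (hpq : p ≤ q) (hc : p.Coprime q) :
    IsAdmissible (christoffel p q) where
  extremalPair := by
    have hq := hp.trans_le hpq
    rw [length_christoffel, intPerSeq_christoffel hq, intPerSeq_maxCyc_christoffel hq hc]
    exact extremalPair_christoffel hq hc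
  one_le_last := by
    have hq := hp.trans_le hpq
    have h : (q - 1) * p / q < p := by
      rw [Nat.div_lt_iff_lt_mul hq, mul_comm p]
      exact Nat.mul_lt_mul_of_pos_right (Nat.sub_one_lt_of_lt hq) hp
    rw [length_christoffel, intPerSeq_christoffel hq, fwdDiff, Nat.sub_add_cancel hq,
      floorSeq_period hq, floorSeq]
    omega

lemma not_dvd_mul_of_lt {i : ℕ} (hc : p.Coprime q) (hi : 0 < i) (hiq : i < q) : ¬ q ∣ i * p :=
  fun h => hiq.not_ge (Nat.le_of_dvd hi (hc.symm.dvd_of_dvd_mul_right h))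

lemma ceilSeq_eq_ceilRightSeq {i : ℕ} (hc : p.Coprime q) (hi : i < q) :
    ceilSeq p q i = ceilRightSeq p q i := by
  rcases Nat.eq_zero_or_pos i with rfl | hi0
  · rw [ceilSeq_zero, ceilRightSeq_zero]
  · rw [ceilSeq_eq_one_add_floorSeq (hi0.trans hi) (not_dvd_mul_of_lt hc hi0 hi),
      ceilRightSeq_of_ne_zero hi0.ne']

lemma fwdDiff_ceilRightSeq_zero (hpq : p < q) : Δ_[1] (ceilRightSeq p q) 0 = 1 := by
  rw [fwdDiff, zero_add, ceilRightSeq_of_ne_zero one_ne_zero, floorSeq_one hpq, ceilRightSeq_zero]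
  rfl

lemma fwdDiff_ceilRightSeq_of_ne_zero {i : ℕ} (hi : i ≠ 0) :
    Δ_[1] (ceilRightSeq p q) i = Δ_[1] (floorSeq p q) i := by
  simp only [fwdDiff, ceilRightSeq_of_ne_zero hi, ceilRightSeq_of_ne_zero i.succ_ne_zero,
    add_sub_add_left_eq_sub]

lemma isBinaryAdmissible_christoffel (hp : 0 < p) (hpq : p < q) (hc : p.Coprime q) :
    IsBinaryAdmissible (christoffel p q) where
  toIsAdmissible := isAdmissible_christoffel hp hpq.le hc
  isBinary := by
    rw [intPerSeq_christoffel (hp.trans hpq)]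
    exact isBinary_fwdDiff_floorSeq (hp.trans hpq) hpq.le
  first_eq_zero := by
    rw [intPerSeq_christoffel (hp.trans hpq), fwdDiff, zero_add, floorSeq_one hpq, floorSeq_zero,
      sub_zero]
  max_first_eq_one := by
    rw [intPerSeq_maxCyc_christoffel (hp.trans hpq) hc, ← fwdDiff_ceilRightSeq_zero hpq]
    simp only [fwdDiff]
    rw [ceilSeq_eq_ceilRightSeq hc (by omega), ceilSeq_eq_ceilRightSeq hc (by omega)]
  max_last_eq_zero := by
    have hq := hp.trans hpq
    have h : (q - 1) * p / q = p - 1 := by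
      rw [Nat.div_eq_iff hq, Nat.sub_mul, Nat.sub_mul, mul_comm p q]
      have := Nat.le_mul_of_pos_right q hp
      omega
    rw [intPerSeq_maxCyc_christoffel hq hc, length_christoffel, fwdDiff, Nat.sub_add_cancel hq,
      ceilSeq_period hq, ceilSeq_eq_ceilRightSeq hc (by omega),
      ceilRightSeq_of_ne_zero (by omega), floorSeq, h]
    omega

lemma upperSeq_christoffel (hpq : p < q) (hc : p.Coprime q) :
    upperSeq (christoffel p q) = Δ_[1] (ceilRightSeq p q) := by
  have hq := Nat.zero_lt_of_lt hpq
  ext n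
  rw [upperSeq_apply (christoffel_ne_nil hq), length_christoffel,
    intPerSeq_maxCyc_christoffel hq hc, intPerSeq_christoffel hq]
  split_ifs with hn hlast
  · obtain rfl : q = n + 1 := by omega
    simp only [fwdDiff]
    rw [ceilSeq_period hq, ceilSeq_eq_ceilRightSeq hc hn, ceilRightSeq_of_ne_zero n.succ_ne_zero,
      floorSeq_period hq]
    ring
  · simp only [fwdDiff]
    rw [ceilSeq_eq_ceilRightSeq hc hn, ceilSeq_eq_ceilRightSeq hc (by omega), add_zero]
  · rw [fwdDiff_ceilRightSeq_of_ne_zero (by omega)]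

lemma isBinary_fwdDiff_ceilRightSeq (hpq : p < q) : IsBinary (Δ_[1] (ceilRightSeq p q)) := by
  intro i
  rcases eq_or_ne i 0 with rfl | hi
  · exact Or.inr (fwdDiff_ceilRightSeq_zero hpq)
  · rw [fwdDiff_ceilRightSeq_of_ne_zero hi]
    exact isBinary_fwdDiff_floorSeq (Nat.zero_lt_of_lt hpq) hpq.le i

lemma isBinary_fwdDiff_ceilSeq (hq : 0 < q) (hpq : p ≤ q) (hc : p.Coprime q) :
    IsBinary (Δ_[1] (ceilSeq p q)) := by
  obtain ⟨k, m, hk⟩ := exists_mul_add_one_eq_mul_succ hq hc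
  rw [fwdDiff_ceilSeq hq hk]
  exact (isBinary_fwdDiff_floorSeq hq hpq).shift k

end Christoffel

/-! ### Farey neighbours -/

/-- The fractions `p / q < p' / q'` are Farey neighbours. -/
structure FareyNeighbours (p q p' q' : ℕ) : Prop where
  pos : 0 < q
  pos' : 0 < q'
  det : p' * q = p * q' + 1

namespace FareyNeighbours

open scoped fwdDiff

variable {p q p' q' : ℕ}

lemma mediant_right (h : FareyNeighbours p q p' q') : FareyNeighbours p q (p + p') (q + q') :=
  ⟨h.pos, Nat.add_pos_left h.pos _, by linarith [h.det]⟩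

lemma mediant_left (h : FareyNeighbours p q p' q') : FareyNeighbours (p + p') (q + q') p' q' :=
  ⟨Nat.add_pos_left h.pos _, h.pos', by linarith [h.det]⟩

lemma coprime_left (h : FareyNeighbours p q p' q') : p.Coprime q := by
  have hdvd : Nat.gcd p q ∣ p' * q := (Nat.gcd_dvd_right p q).mul_left p'
  rw [h.det] at hdvd
  exact Nat.dvd_one.1 ((Nat.dvd_add_right ((Nat.gcd_dvd_left p q).mul_right q')).1 hdvd)

lemma coprime_right (h : FareyNeighbours p q p' q') : p'.Coprime q' := by
  have hdvd : Nat.gcd p' q' ∣ p' * q := (Nat.gcd_dvd_left p' q').mul_right q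
  rw [h.det] at hdvd
  exact Nat.dvd_one.1 ((Nat.dvd_add_right ((Nat.gcd_dvd_right p' q').mul_left p)).1 hdvd)

lemma lt (h : FareyNeighbours p q p' q') (hp' : p' ≤ q') : p < q := by
  have hdet := h.det
  by_contra! hqp
  have hle : q * p' ≤ p * q' := Nat.mul_le_mul hqp hp'
  rw [mul_comm] at hle
  omega

lemma pos_right (h : FareyNeighbours p q p' q') : 0 < p' := by
  have hdet := h.det
  by_contra! hp'
  obtain rfl : p' = 0 := by omega
  omega

/-- No fraction of denominator less than `q + q'` lies strictly between `p / q` and `p' / q'`. -/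
lemma ceilRightSeq_eq_ceilSeq (h : FareyNeighbours p q p' q') {i : ℕ} (hi : i < q + q') :
    ceilRightSeq p q i = ceilSeq p' q' i := by
  rcases eq_or_ne i 0 with rfl | hi0
  · rw [ceilRightSeq_zero, ceilSeq_zero]
  have hmod := Nat.div_add_mod (i * p) q
  have hmod_lt := Nat.mod_lt (i * p) h.pos
  set k := i * p / q with hk
  have hdet : i * p' * q = i * p * q' + i := by
    rw [mul_assoc, h.det]
    ring
  have hlower : q' * k < i * p' := by
    refine lt_of_mul_lt_mul_right (a := q) ?_ (Nat.zero_le q)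
    rw [hdet, ← hmod]
    nlinarith [Nat.zero_le (i * p % q * q'), Nat.pos_of_ne_zero hi0]
  have hupper : i * p' ≤ q' * (k + 1) := by
    by_contra! hlt
    have hmul : (q' * (k + 1) + 1) * q ≤ i * p' * q := Nat.mul_le_mul_right q hlt
    have hmul' : (i * p + 1) * q' ≤ q * (k + 1) * q' :=
      Nat.mul_le_mul_right q' (by rw [mul_add_one]; omega)
    nlinarith
  have hceil : i * p' ⌈/⌉ q' = 1 + k := by
    rw [Nat.ceilDiv_eq_add_pred_div, Nat.div_eq_iff h.pos', mul_comm _ q', mul_add, mul_one]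
    rw [mul_add_one] at hupper
    omega
  rw [ceilRightSeq_of_ne_zero hi0, floorSeq, ceilSeq, hceil, ← hk, Nat.cast_add, Nat.cast_one]

lemma fwdDiff_ceilRightSeq_eq (h : FareyNeighbours p q p' q') {i : ℕ} (hi : i < q + q' - 1) :
    Δ_[1] (ceilRightSeq p q) i = Δ_[1] (ceilSeq p' q') i := by
  simp only [fwdDiff]
  rw [h.ceilRightSeq_eq_ceilSeq (by omega), h.ceilRightSeq_eq_ceilSeq (by omega)]

lemma floorSeq_mediant_of_le (h : FareyNeighbours p q p' q') {i : ℕ} (hi : i ≤ q) :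
    floorSeq (p + p') (q + q') i = floorSeq p q i := by
  have hpos' := h.pos'
  have hmod := Nat.div_add_mod (i * p) q
  have hmod_lt := Nat.mod_lt (i * p) h.pos
  refine congrArg Nat.cast ?_
  set k := i * p / q
  have hdet : i * (p + p') * q = i * p * (q + q') + i := by
    linarith [congrArg (i * ·) h.det]
  have hlower : k * (q + q') ≤ i * (p + p') := by
    refine le_of_mul_le_mul_right (a := q) ?_ h.pos
    rw [hdet, ← hmod]
    nlinarith [Nat.zero_le (i * p % q * (q + q'))]
  have hupper : i * (p + p') < (k + 1) * (q + q') := by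
    by_contra! hle
    have hmul : (k + 1) * (q + q') * q ≤ i * (p + p') * q := Nat.mul_le_mul_right q hle
    have hmul' : (i * p + 1) * (q + q') ≤ q * (k + 1) * (q + q') :=
      Nat.mul_le_mul_right _ (by rw [mul_add_one]; omega)
    nlinarith
  exact Nat.div_eq_of_lt_le hlower hupper

lemma floorSeq_mediant_add (h : FareyNeighbours p q p' q') {i : ℕ} (hi : i ≤ q') :
    floorSeq (p + p') (q + q') (q + i) = p + floorSeq p' q' i := by
  have hpos := h.pos
  have hmod := Nat.div_add_mod (i * p') q'
  have hmod_lt := Nat.mod_lt (i * p') h.pos'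
  rw [floorSeq, floorSeq, ← Nat.cast_add]
  refine congrArg Nat.cast ?_
  set k := i * p' / q'
  have hdet : (q + i) * (p + p') * q' + i = i * p' * (q + q') + q' * (p * (q + q') + 1) := by
    linarith [congrArg (i * ·) h.det, congrArg (q' * ·) h.det]
  have hlower : (p + k) * (q + q') ≤ (q + i) * (p + p') := by
    refine le_of_mul_le_mul_right (a := q') ?_ h.pos'
    nlinarith [Nat.zero_le (i * p' % q' * (q + q')), Nat.zero_le i]
  have hupper : (q + i) * (p + p') < (p + k + 1) * (q + q') := by
    refine lt_of_mul_lt_mul_right (a := q') ?_ (Nat.zero_le q')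
    have hmul : (i * p' + 1) * (q + q') ≤ q' * (k + 1) * (q + q') :=
      Nat.mul_le_mul_right _ (by rw [mul_add_one]; omega)
    nlinarith
  exact Nat.div_eq_of_lt_le hlower hupper

lemma christoffel_append (h : FareyNeighbours p q p' q') :
    christoffel p q ++ christoffel p' q' = christoffel (p + p') (q + q') := by
  refine List.ext_getElem (by simp) fun i hi hi' => ?_
  have hmed := getD_christoffel (p := p + p') (by simpa using hi' : i < q + q')
  rw [List.getD_eq_getElem _ _ hi'] at hmed
  zify
  rw [hmed, ← List.getD_eq_getElem _ 0 hi, fwdDiff]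
  rcases lt_or_ge i q with hlt | hge
  · rw [List.getD_append _ _ _ _ (by simpa using hlt), getD_christoffel hlt, fwdDiff,
      h.floorSeq_mediant_of_le hlt, h.floorSeq_mediant_of_le hlt.le]
  · obtain ⟨j, rfl⟩ := Nat.exists_eq_add_of_le hge
    have hj : j < q' := by simpa using hi'
    rw [List.getD_append_right _ _ _ _ (by simp), length_christoffel, Nat.add_sub_cancel_left,
      getD_christoffel hj, fwdDiff, add_assoc, h.floorSeq_mediant_add hj,
      h.floorSeq_mediant_add hj.le, add_sub_add_left_eq_sub]

end FareyNeighbours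

/-- Two words that are the Christoffel words of Farey neighbours in `[0, 1]`. -/
def FareyPair (v w : List ℕ) : Prop :=
  ∃ p q p' q', FareyNeighbours p q p' q' ∧ p' ≤ q' ∧ v = christoffel p q ∧ w = christoffel p' q'

lemma FareyPair.append {v w : List ℕ} (h : FareyPair v w) :
    FareyPair v (v ++ w) ∧ FareyPair (v ++ w) w := by
  obtain ⟨p, q, p', q', h, hp', rfl, rfl⟩ := h
  rw [h.christoffel_append]
  exact ⟨⟨_, _, _, _, h.mediant_right, Nat.add_le_add (h.lt hp').le hp', rfl, rfl⟩,
    ⟨_, _, _, _, h.mediant_left, hp', rfl, rfl⟩⟩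

lemma FareyPair.exists_christoffel_left {v w : List ℕ} (h : FareyPair v w) :
    ∃ p q, 0 < q ∧ p ≤ q ∧ p.Coprime q ∧ v = christoffel p q := by
  obtain ⟨p, q, p', q', h, hp', rfl, -⟩ := h
  exact ⟨p, q, h.pos, (h.lt hp').le, h.coprime_left, rfl⟩

lemma exists_fareyInsert_eq_cons (v : List ℕ) (l : List (List ℕ)) :
    ∃ l', fareyInsert (v :: l) = v :: l' := by
  rcases l with _ | ⟨w, l⟩
  · exact ⟨[], rfl⟩
  · exact ⟨_, rfl⟩

lemma isChain_fareyInsert {l : List (List ℕ)} (h : l.IsChain FareyPair) :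
    (fareyInsert l).IsChain FareyPair := by
  induction l with
  | nil => exact List.isChain_nil
  | cons v l ih =>
    rcases l with _ | ⟨w, l⟩
    · exact List.isChain_singleton _
    · obtain ⟨hvw, hwl⟩ := List.isChain_cons_cons.1 h
      obtain ⟨l', hl'⟩ := exists_fareyInsert_eq_cons w l
      have hchain := ih hwl
      rw [fareyInsert]
      rw [hl'] at hchain ⊢
      exact List.isChain_cons_cons.2
        ⟨hvw.append.1, List.isChain_cons_cons.2 ⟨hvw.append.2, hchain⟩⟩

lemma isChain_fareyLevel (n : ℕ) : (fareyLevel n).IsChain FareyPair := by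
  induction n with
  | zero =>
    exact List.isChain_pair.2 ⟨0, 1, 1, 1, ⟨one_pos, one_pos, rfl⟩, le_rfl, rfl, rfl⟩
  | succ n ih => exact isChain_fareyInsert ih

lemma mem_or_fareyPair_of_mem_fareyInsert {l : List (List ℕ)} (hl : l.IsChain FareyPair)
    {w : List ℕ} (hw : w ∈ fareyInsert l) : w ∈ l ∨ ∃ u, FareyPair w u := by
  induction l with
  | nil => exact Or.inl hw
  | cons v l ih =>
    rcases l with _ | ⟨u, l⟩
    · exact Or.inl hw
    obtain ⟨hvu, hul⟩ := List.isChain_cons_cons.1 hl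
    rw [fareyInsert, List.mem_cons, List.mem_cons] at hw
    rcases hw with rfl | rfl | hw
    · exact Or.inl List.mem_cons_self
    · exact Or.inr ⟨u, hvu.append.2⟩
    · exact (ih hul hw).imp_left (List.mem_cons_of_mem v)

lemma exists_christoffel_of_mem_fareyLevel {n : ℕ} {w : List ℕ} (hw : w ∈ fareyLevel n) :
    ∃ p q, 0 < q ∧ p ≤ q ∧ p.Coprime q ∧ w = christoffel p q := by
  induction n with
  | zero =>
    simp only [fareyLevel, List.mem_cons, List.not_mem_nil, or_false] at hw
    rcases hw with rfl | rfl
    · exact ⟨0, 1, one_pos, zero_le_one, Nat.coprime_one_right 0, rfl⟩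
    · exact ⟨1, 1, one_pos, le_rfl, Nat.coprime_one_right 1, rfl⟩
  | succ n ih =>
    rcases mem_or_fareyPair_of_mem_fareyInsert (isChain_fareyLevel n) hw with hw | ⟨u, hwu⟩
    · exact ih hw
    · exact hwu.exists_christoffel_left

lemma exists_christoffel_of_mem_FareySet {w : List ℕ} (hw : w ∈ FareySet) :
    ∃ p q, 0 < p ∧ p < q ∧ p.Coprime q ∧ w = christoffel p q := by
  obtain ⟨⟨n, hn⟩, hne_zero, hne_one⟩ := hw
  obtain ⟨p, q, hq, hpq, hc, rfl⟩ := exists_christoffel_of_mem_fareyLevel hn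
  refine ⟨p, q, Nat.pos_of_ne_zero ?_, lt_of_le_of_ne hpq ?_, hc, rfl⟩
  · rintro rfl
    obtain rfl : q = 1 := by simpa using hc
    exact hne_zero rfl
  · rintro rfl
    obtain rfl : p = 1 := by simpa using hc
    exact hne_one rfl

lemma isBinaryAdmissible_of_mem_FareySet {w : List ℕ} (hw : w ∈ FareySet) :
    IsBinaryAdmissible w := by
  obtain ⟨p, q, hp, hpq, hc, rfl⟩ := exists_christoffel_of_mem_FareySet hw
  exact isBinaryAdmissible_christoffel hp hpq hc

/-- Farey neighbours in `[0, 1]` whose Christoffel words are consecutive on some Farey level. -/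
structure FareyAdj (p q p' q' : ℕ) : Prop extends FareyNeighbours p q p' q' where
  le' : p' ≤ q'
  level : ∃ n l₁ l₂, fareyLevel n = l₁ ++ christoffel p q :: christoffel p' q' :: l₂

lemma fareyAdj_zero_one : FareyAdj 0 1 1 1 where
  pos := one_pos
  pos' := one_pos
  det := rfl
  le' := le_rfl
  level := ⟨0, [], [], rfl⟩

lemma exists_fareyInsert_append_eq (l₁ : List (List ℕ)) (v w : List ℕ) (l₂ : List (List ℕ)) :
    ∃ l l', fareyInsert (l₁ ++ v :: w :: l₂) = l ++ v :: (v ++ w) :: w :: l' := by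
  induction l₁ with
  | nil =>
    obtain ⟨l', hl'⟩ := exists_fareyInsert_eq_cons w l₂
    exact ⟨[], l', by rw [List.nil_append, fareyInsert, hl', List.nil_append]⟩
  | cons u l₁ ih =>
    obtain ⟨l, l', h⟩ := ih
    rcases l₁ with _ | ⟨u', l₁⟩
    · exact ⟨u :: (u ++ v) :: l, l', congrArg (u :: (u ++ v) :: ·) h⟩
    · exact ⟨u :: (u ++ u') :: l, l', congrArg (u :: (u ++ u') :: ·) h⟩

namespace FareyAdj

variable {p q p' q' : ℕ}

lemma exists_fareyLevel_mediant (h : FareyAdj p q p' q') : ∃ n l₁ l₂, fareyLevel n =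
    l₁ ++ christoffel p q :: christoffel (p + p') (q + q') :: christoffel p' q' :: l₂ := by
  obtain ⟨n, l₁, l₂, hl⟩ := h.level
  obtain ⟨l, l', hl'⟩ :=
    exists_fareyInsert_append_eq l₁ (christoffel p q) (christoffel p' q') l₂
  rw [← hl, h.christoffel_append] at hl'
  exact ⟨n + 1, l, l', hl'⟩

lemma mediant_right (h : FareyAdj p q p' q') : FareyAdj p q (p + p') (q + q') where
  toFareyNeighbours := h.toFareyNeighbours.mediant_right
  le' := Nat.add_le_add (h.lt h.le').le h.le'
  level := by
    obtain ⟨n, l, l', hl⟩ := h.exists_fareyLevel_mediant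
    exact ⟨n, l, _, hl⟩

lemma mediant_left (h : FareyAdj p q p' q') : FareyAdj (p + p') (q + q') p' q' where
  toFareyNeighbours := h.toFareyNeighbours.mediant_left
  le' := h.le'
  level := by
    obtain ⟨n, l, l', hl⟩ := h.exists_fareyLevel_mediant
    exact ⟨n, l ++ [christoffel p q], l', by rw [hl, List.append_assoc]; rfl⟩

lemma christoffel_mediant_mem_FareySet (h : FareyAdj p q p' q') :
    christoffel (p + p') (q + q') ∈ FareySet := by
  obtain ⟨n, l₁, l₂, hl⟩ := h.mediant_right.level
  have hlength (d : ℕ) : christoffel (p + p') (q + q') ≠ [d] := fun heq => by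
    have hone : q + q' = 1 := by simpa using congrArg List.length heq
    have hpos := h.pos
    have hpos' := h.pos'
    omega
  exact ⟨⟨n, by simp [hl]⟩, hlength 0, hlength 1⟩

end FareyAdj

/-- Descending the Farey tree towards a point `x` outside the intervals `[l p q, r p q]`, until
the denominators sum to more than `N`. -/
lemma exists_fareyAdj {r l : ℕ → ℕ → ℝ} {x : ℝ} (hr : r 0 1 ≤ x) (hl : x ≤ l 1 1)
    (hx : ∀ p q, christoffel p q ∈ FareySet → x < l p q ∨ r p q < x) {N : ℕ} (hN : 1 ≤ N) :
    ∃ p q p' q', FareyAdj p q p' q' ∧ q ≤ N ∧ N < q + q' ∧ r p q ≤ x ∧ x ≤ l p' q' := by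
  have descent (m : ℕ) : ∃ p q p' q', FareyAdj p q p' q' ∧ q ≤ N ∧ q' ≤ N ∧
      (N < q + q' ∨ m ≤ q + q') ∧ r p q ≤ x ∧ x ≤ l p' q' := by
    induction m with
    | zero => exact ⟨0, 1, 1, 1, fareyAdj_zero_one, hN, hN, Or.inr (Nat.zero_le _), hr, hl⟩
    | succ m ih =>
      obtain ⟨p, q, p', q', h, hq, hq', hm, hr', hl'⟩ := ih
      by_cases hlt : N < q + q'
      · exact ⟨p, q, p', q', h, hq, hq', Or.inl hlt, hr', hl'⟩
      · have hpos := h.pos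
        have hpos' := h.pos'
        rcases hx _ _ h.christoffel_mediant_mem_FareySet with hxl | hxr
        · exact ⟨_, _, _, _, h.mediant_right, hq, by omega, Or.inr (by omega), hr', hxl.le⟩
        · exact ⟨_, _, _, _, h.mediant_left, by omega, hq', Or.inr (by omega), hxr.le, hl'⟩
  obtain ⟨p, q, p', q', h, hq, -, hm, hr', hl'⟩ := descent (N + 1)
  exact ⟨p, q, p', q', h, hq, hm.elim id Nat.lt_of_succ_le, hr', hl'⟩

/-! ### The gaps between Farey intervals -/

section Gaps

open scoped fwdDiff

/-- A coding of binary sequences by sequences with digits in `0, …, D`: the first `n` binary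
digits determine the first `n` digits of the code, and the digit `1` in front yields a positive
digit in front. -/
structure IsDigitCoding (D : ℤ) (T : (ℕ → ℤ) → ℕ → ℤ) : Prop where
  congr {c d : ℕ → ℤ} {n : ℕ} : (∀ i < n, c i = d i) → ∀ i < n, T c i = T d i
  isDigitSeq {c : ℕ → ℤ} : IsBinary c → IsDigitSeq D (T c)
  one_le_head {c : ℕ → ℤ} : IsBinary c → c 0 = 1 → 1 ≤ T c 0

lemma isDigitCoding_const_add (k : ℕ) : IsDigitCoding (k + 1) fun c i => k + c i where
  congr h i hi := by rw [h i hi]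
  isDigitSeq hc i := by
    change (k : ℤ) + _ ∈ _
    rw [mem_Icc]
    rcases hc i with h | h <;> omega
  one_le_head _ h := by omega

lemma IsAdmissible.isDigitCoding_codeSeq {S : List ℕ} (h : IsAdmissible S) :
    IsDigitCoding (maxDigit S + 1) fun c => codeSeq S (consSeq 0 c) where
  congr hcd := codeSeq_congr rfl hcd
  isDigitSeq hc := h.isDigitSeq_codeSeq (hc.consSeq (Or.inl rfl))
  one_le_head hc _ := h.one_le_codeSeq (i := 0) (hc.consSeq (Or.inl rfl)) rfl

variable {D : ℤ} {T : (ℕ → ℤ) → ℕ → ℤ}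

lemma IsDigitCoding.nonneg (hT : IsDigitCoding D T) : 0 ≤ D :=
  have hdigit := hT.isDigitSeq IsBinary.const_one 0
  hdigit.1.trans hdigit.2

lemma FareyNeighbours.base_sub_le {p q p' q' : ℕ} {x y δ : ℝ} (h : FareyNeighbours p q p' q')
    (hp' : p' ≤ q') (hT : IsDigitCoding D T) (hδ : 0 < δ) (hx : 1 ≤ x) (hxy : x ≤ y)
    (hy : 1 + δ ≤ y)
    (hvx : HasSum (fun i : ℕ => (T (Δ_[1] (ceilRightSeq p q)) i : ℝ) / x ^ (i + 1)) 1)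
    (hvy : baseVal y (T (Δ_[1] (ceilSeq p' q'))) = 1) :
    y - x ≤ (D + 1) ^ 2 * (D / δ) * (1 + δ)⁻¹ ^ (q + q' - 1) := by
  have hpq := h.lt hp'
  have hleft := isBinary_fwdDiff_ceilRightSeq hpq
  have hright := isBinary_fwdDiff_ceilSeq h.pos' hp' h.coprime_right
  exact IsDigitSeq.base_sub_le_of_agree (hT.isDigitSeq hleft) (hT.isDigitSeq hright) hδ hx hxy hy
    (hT.one_le_head hleft (fwdDiff_ceilRightSeq_zero hpq)) hvx.summable
    (hT.congr fun _ hi => h.fwdDiff_ceilRightSeq_eq hi) hvx.tsum_eq hvy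

/-- The gaps between the intervals `[l p q, r p q]` of denominator at most `N` are about `N²` in
number, and each of them is exponentially short in `N`. -/
lemma hasBoxDimZero_of_farey_gaps {G : Set ℝ} {r l : ℕ → ℕ → ℝ} {δ : ℝ} (hδ : 0 < δ)
    (hT : IsDigitCoding D T)
    (hr : ∀ p q, p < q → p.Coprime q → 1 ≤ r p q ∧
      HasSum (fun i : ℕ => (T (Δ_[1] (ceilRightSeq p q)) i : ℝ) / r p q ^ (i + 1)) 1)
    (hl : ∀ p q, 0 < p → p ≤ q → p.Coprime q → baseVal (l p q) (T (Δ_[1] (ceilSeq p q))) = 1)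
    (hG : ∀ x ∈ G, 1 + δ ≤ x ∧ r 0 1 ≤ x ∧ x ≤ l 1 1 ∧
      ∀ p q, christoffel p q ∈ FareySet → x < l p q ∨ r p q < x) : HasBoxDimZero G := by
  have hν1 : (1 + δ)⁻¹ < 1 := inv_lt_one_of_one_lt₀ (by linarith)
  have hD : (0 : ℝ) ≤ D := by exact_mod_cast hT.nonneg
  refine hasBoxDimZero_of_card_le_pow (K := (D + 1) ^ 2 * (D / δ) + 1) (ν := (1 + δ)⁻¹) 2
    (by positivity) (by positivity) hν1 fun N =>
    ⟨(Finset.range (N + 1) ×ˢ Finset.range (N + 1)).image fun a => r a.1 (a.2 + 1), ?_,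
      fun x hx => ?_⟩
  · refine Finset.card_image_le.trans ?_
    rw [Finset.card_product, Finset.card_range, sq]
  · obtain ⟨hδx, h01, h11, hout⟩ := hG x hx
    obtain ⟨p, q, p', q', h, hq, hN, hrx, hxl⟩ := exists_fareyAdj h01 h11 hout N.succ_pos
    have hpos := h.pos
    have hpq := h.lt h.le'
    obtain ⟨hr1, hvr⟩ := hr p q hpq h.coprime_left
    have hgap := h.base_sub_le h.le' hT hδ hr1 (hrx.trans hxl) (hδx.trans hxl) hvr
      (hl p' q' h.pos_right h.le' h.coprime_right)
    refine mem_iUnion₂.2 ⟨r p q, Finset.mem_image.2 ⟨(p, q - 1), ?_, ?_⟩, ?_⟩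
    · simp only [Finset.mem_product, Finset.mem_range]
      omega
    · rw [Nat.sub_add_cancel hpos]
    · rw [Metric.mem_ball, Real.dist_eq, abs_of_nonneg (by linarith)]
      calc x - r p q ≤ l p' q' - r p q := by linarith
        _ ≤ (D + 1) ^ 2 * (D / δ) * (1 + δ)⁻¹ ^ (q + q' - 1) := hgap
        _ ≤ (D + 1) ^ 2 * (D / δ) * (1 + δ)⁻¹ ^ N :=
          mul_le_mul_of_nonneg_left (pow_le_pow_of_le_one (by positivity) hν1.le (by omega))
            (by positivity)
        _ < ((D + 1) ^ 2 * (D / δ) + 1) * (1 + δ)⁻¹ ^ N :=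
          mul_lt_mul_of_pos_right (lt_add_one _) (by positivity)

end Gaps

lemma lt_or_lt_of_notMem_Jint {S : List ℕ} {x : ℝ} (hx : x ∉ Jint S) :
    x < betaL S ∨ betaR S < x := by
  simpa only [Jint, mem_Icc, not_and_or, not_le] using hx

lemma ne_of_christoffel_mem_FareySet {p q : ℕ} (h : christoffel p q ∈ FareySet) :
    p ≠ 0 ∧ q ≠ 1 := by
  have hr := isBinaryAdmissible_of_mem_FareySet h
  have hlast := hr.last_eq_one
  rw [length_christoffel] at hlast
  refine ⟨?_, ?_⟩
  · rintro rfl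
    have hq : 0 < q := by simpa using hr.length_pos
    simp [intPerSeq_christoffel hq, fwdDiff, floorSeq] at hlast
  · rintro rfl
    exact zero_ne_one (hr.first_eq_zero.symm.trans hlast)

/-! ### The relative exceptional sets -/

section Relative

open scoped fwdDiff

lemma fwdDiff_ceilRightSeq_zero_one : Δ_[1] (ceilRightSeq 0 1) = consSeq 1 fun _ => 0 := by
  ext i
  rcases i with _ | i
  · exact fwdDiff_ceilRightSeq_zero one_pos
  · rw [fwdDiff_ceilRightSeq_of_ne_zero i.succ_ne_zero]
    simp [fwdDiff, floorSeq, consSeq]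

lemma fwdDiff_ceilSeq_one_one : Δ_[1] (ceilSeq 1 1) = fun _ => 1 := by
  ext i
  simp [fwdDiff, ceilSeq]

/-- The right endpoint of the interval removed at the slope `p / q` in the definition of `E^S`;
at the slope `0` this is the right endpoint of `I^S`. -/
noncomputable def relRight (S : List ℕ) (p q : ℕ) : ℝ :=
  if p = 0 then betaStar S else betaR (subst S (christoffel p q))

/-- The left endpoint of the interval removed at the slope `p / q` in the definition of `E^S`;
at the slope `1` this is the right endpoint of `J^S`. -/
noncomputable def relLeft (S : List ℕ) (p q : ℕ) : ℝ :=
  if q = 1 then betaR S else betaL (subst S (christoffel p q))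

namespace IsAdmissible

variable {S : List ℕ} {p q : ℕ}

lemma relRight_spec (h : IsAdmissible S) (hpq : p < q) (hc : p.Coprime q) :
    1 < relRight S p q ∧
      baseVal (relRight S p q) (codeSeq S (consSeq 0 (Δ_[1] (ceilRightSeq p q)))) = 1 := by
  rw [relRight]
  split_ifs with hp
  · subst hp
    obtain rfl : q = 1 := by simpa using hc
    rw [fwdDiff_ceilRightSeq_zero_one]
    exact h.betaStar_spec
  · have hr := isBinaryAdmissible_christoffel (Nat.pos_of_ne_zero hp) hpq hc
    rw [← upperSeq_christoffel hpq hc, ← h.upperSeq_subst hr]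
    exact (h.isAdmissible_subst hr).betaR_spec

lemma baseVal_relLeft (h : IsAdmissible S) (hp : 0 < p) (hpq : p ≤ q) (hc : p.Coprime q) :
    baseVal (relLeft S p q) (codeSeq S (consSeq 0 (Δ_[1] (ceilSeq p q)))) = 1 := by
  rw [relLeft]
  split_ifs with hq
  · subst hq
    obtain rfl : p = 1 := by omega
    rw [fwdDiff_ceilSeq_one_one]
    exact h.betaR_spec.2
  · have hlt : p < q := hpq.lt_of_ne fun heq => hq (by simpa [heq] using hc)
    have hr := isBinaryAdmissible_christoffel hp hlt hc
    rw [← intPerSeq_maxCyc_christoffel (hp.trans hlt) hc, ← h.intPerSeq_maxCyc_subst hr]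
    exact (h.isAdmissible_subst hr).betaL_spec.2

lemma hasBoxDimZero_EexcRel (h : IsAdmissible S) : HasBoxDimZero (EexcRel S) := by
  refine hasBoxDimZero_of_farey_gaps (r := relRight S) (l := relLeft S)
    (sub_pos.2 h.betaStar_spec.1) h.isDigitCoding_codeSeq (fun p q hpq hc => ?_)
    (fun p q hp hpq hc => h.baseVal_relLeft hp hpq hc) ?_
  · obtain ⟨hβ, hv⟩ := h.relRight_spec hpq hc
    have hdigit := h.isDigitCoding_codeSeq.isDigitSeq (isBinary_fwdDiff_ceilRightSeq hpq)
    exact ⟨hβ.le, hv ▸ (hdigit.summable hβ).hasSum⟩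
  · rintro x ⟨⟨hJ, hI⟩, hout⟩
    have hstar : betaStar S < x := not_le.1 fun hle => hI ⟨hJ.1, hle⟩
    refine ⟨by linarith, hstar.le, hJ.2, fun p q hmem => ?_⟩
    obtain ⟨hp, hq⟩ := ne_of_christoffel_mem_FareySet hmem
    rw [relLeft, relRight, if_neg hq, if_neg hp]
    exact lt_or_lt_of_notMem_Jint fun hx => hout (mem_iUnion₂.2 ⟨_, hmem, hx⟩)

end IsAdmissible

end Relative

/-! ### Incrementing all digits -/

section Theta

variable {w : List ℕ}

lemma theta_iterate (k : ℕ) (w : List ℕ) : theta^[k] w = w.map (· + k) := by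
  induction k with
  | zero => simp
  | succ k ih =>
    rw [Function.iterate_succ_apply', ih, theta, List.map_map]
    rfl

lemma length_theta_iterate (k : ℕ) (w : List ℕ) : (theta^[k] w).length = w.length := by
  simp [theta_iterate]

lemma intPerSeq_theta_iterate (hw : w ≠ []) (k : ℕ) :
    intPerSeq (theta^[k] w) = fun i => (k : ℤ) + intPerSeq w i := by
  refine intPerSeq_eq_of_periodic (by simpa [theta_iterate] using hw) (fun i => ?_) fun i hi => ?_
  · rw [length_theta_iterate, periodic_intPerSeq]
  · rw [length_theta_iterate] at hi
    simp [intPerSeq_of_lt hi, theta_iterate, hi, add_comm]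

lemma extremalPair_theta_iterate {Y : ℕ → ℤ} (h : ExtremalPair w.length (intPerSeq w) Y) (k : ℕ) :
    ExtremalPair (theta^[k] w).length (intPerSeq (theta^[k] w)) fun i => k + Y i := by
  rw [length_theta_iterate, intPerSeq_theta_iterate (List.length_pos_iff.1 h.pos)]
  exact h.comp_strictMono fun _ _ hlt => add_lt_add_right hlt (k : ℤ)

lemma intPerSeq_maxCyc_theta_iterate {Y : ℕ → ℤ} (h : ExtremalPair w.length (intPerSeq w) Y)
    (k : ℕ) : intPerSeq (maxCyc (theta^[k] w)) = fun i => k + Y i :=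
  (extremalPair_theta_iterate h k).intPerSeq_maxCyc

lemma upperSeq_theta_iterate {Y : ℕ → ℤ} (h : ExtremalPair w.length (intPerSeq w) Y) (k : ℕ) :
    upperSeq (theta^[k] w) = fun i => k + upperSeq w i := by
  have hw := List.length_pos_iff.1 h.pos
  ext i
  rw [upperSeq_apply (by simpa [theta_iterate] using hw), upperSeq_apply hw,
    length_theta_iterate, intPerSeq_maxCyc_theta_iterate h, h.intPerSeq_maxCyc,
    intPerSeq_theta_iterate hw]
  split_ifs <;> ring

lemma isAdmissible_theta_iterate {Y : ℕ → ℤ} {k : ℕ} (h : ExtremalPair w.length (intPerSeq w) Y)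
    (hlast : 1 ≤ k + intPerSeq w (w.length - 1)) : IsAdmissible (theta^[k] w) where
  extremalPair := by
    rw [intPerSeq_maxCyc_theta_iterate h]
    exact extremalPair_theta_iterate h k
  one_le_last := by
    rwa [length_theta_iterate, intPerSeq_theta_iterate (List.length_pos_iff.1 h.pos)]

end Theta

lemma exists_christoffel_of_mem_FareyHat {w : List ℕ} (hw : w ∈ FareyHat) :
    ∃ p q, 0 < p ∧ p ≤ q ∧ p.Coprime q ∧ w = christoffel p q := by
  rcases hw with hw | hw
  · obtain ⟨p, q, hp, hpq, hc, heq⟩ := exists_christoffel_of_mem_FareySet hw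
    exact ⟨p, q, hp, hpq.le, hc, heq⟩
  · exact ⟨1, 1, one_pos, le_rfl, Nat.coprime_one_left 1, hw⟩

lemma isAdmissible_of_mem_FareyExt {w : List ℕ} (hw : w ∈ FareyExt) : IsAdmissible w := by
  obtain ⟨v, hv, k, rfl⟩ := hw
  obtain ⟨p, q, hp, hpq, hc, rfl⟩ := exists_christoffel_of_mem_FareyHat hv
  have h := isAdmissible_christoffel hp hpq hc
  exact isAdmissible_theta_iterate h.extremalPair (by linarith [h.one_le_last])

lemma IsAdmissible.isAdmissible_foldl_subst {S : List ℕ} {rs : List (List ℕ)}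
    (h : IsAdmissible S) (hrs : ∀ r ∈ rs, r ∈ FareySet) : IsAdmissible (rs.foldl subst S) := by
  induction rs generalizing S with
  | nil => exact h
  | cons r rs ih =>
    rw [List.forall_mem_cons] at hrs
    exact ih (h.isAdmissible_subst (isBinaryAdmissible_of_mem_FareySet hrs.1)) hrs.2

lemma isAdmissible_of_mem_LambdaE {m : ℕ} {S : List ℕ} (hS : S ∈ LambdaE m) : IsAdmissible S := by
  obtain ⟨s, hs, rs, -, hrs, rfl⟩ := hS
  exact (isAdmissible_of_mem_FareyExt hs).isAdmissible_foldl_subst hrs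

/-! ### The exceptional set -/

section Exceptional

open scoped fwdDiff

variable {k p q : ℕ}

/-- The part of the exceptional set in `(k + 1, k + 2]` that stays away from `1`. -/
noncomputable def excPiece (k : ℕ) (δ : ℝ) : Set ℝ :=
  {x ∈ Eexc | x ∈ Ioc (k + 1 : ℝ) (k + 2) ∧ 1 + δ ≤ x}

/-- The right endpoint of the interval removed from `(k + 1, k + 2]` at the slope `p / q`.  At the
slope `0` the word is `θ^k(0) = θ^{k-1}(1)` if `k ≥ 1`, and the endpoint is `1` if `k = 0`. -/
noncomputable def excRight (k p q : ℕ) : ℝ :=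
  if k = 0 ∧ p = 0 then 1 else betaR (theta^[k] (christoffel p q))

lemma extremalPair_intPerSeq_christoffel (hq : 0 < q) (hc : p.Coprime q) :
    ExtremalPair (christoffel p q).length (intPerSeq (christoffel p q)) (Δ_[1] (ceilSeq p q)) := by
  rw [length_christoffel, intPerSeq_christoffel hq]
  exact extremalPair_christoffel hq hc

lemma isAdmissible_theta_iterate_christoffel (hpq : p ≤ q) (hc : p.Coprime q)
    (h : ¬(k = 0 ∧ p = 0)) : IsAdmissible (theta^[k] (christoffel p q)) := by
  have hq : 0 < q := by
    rcases Nat.eq_zero_or_pos q with rfl | hq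
    · simp_all
    · exact hq
  refine isAdmissible_theta_iterate (extremalPair_intPerSeq_christoffel hq hc) ?_
  rcases Nat.eq_zero_or_pos p with hp | hp
  · have := intPerSeq_nonneg (christoffel p q) ((christoffel p q).length - 1)
    omega
  · have := (isAdmissible_christoffel hp hpq hc).one_le_last
    omega

lemma excRight_spec (hpq : p < q) (hc : p.Coprime q) :
    1 ≤ excRight k p q ∧
      HasSum (fun i : ℕ => ((k + Δ_[1] (ceilRightSeq p q) i : ℤ) : ℝ) /
        excRight k p q ^ (i + 1)) 1 := by
  rw [excRight]
  split_ifs with h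
  · obtain ⟨rfl, rfl⟩ := h
    obtain rfl : q = 1 := by simpa using hc
    rw [fwdDiff_ceilRightSeq_zero_one]
    refine ⟨le_rfl, (hasSum_ite_eq 0 (1 : ℝ)).congr_fun fun i => ?_⟩
    rcases i with _ | i <;> simp [consSeq]
  · obtain ⟨hβ, hv⟩ := (isAdmissible_theta_iterate_christoffel hpq.le hc h).betaR_spec
    rw [upperSeq_theta_iterate
      (extremalPair_intPerSeq_christoffel (Nat.zero_lt_of_lt hpq) hc),
      upperSeq_christoffel hpq hc] at hv
    have hdigit := (isDigitCoding_const_add k).isDigitSeq (isBinary_fwdDiff_ceilRightSeq hpq)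
    exact ⟨hβ.le, hv ▸ (hdigit.summable hβ).hasSum⟩

lemma betaL_theta_iterate_spec (hp : 0 < p) (hpq : p ≤ q) (hc : p.Coprime q) :
    1 < betaL (theta^[k] (christoffel p q)) ∧
      baseVal (betaL (theta^[k] (christoffel p q))) (fun i => k + Δ_[1] (ceilSeq p q) i) = 1 := by
  rw [← intPerSeq_maxCyc_theta_iterate (extremalPair_intPerSeq_christoffel (hp.trans_le hpq) hc)]
  exact (isAdmissible_theta_iterate_christoffel hpq hc fun h => hp.ne' h.2).betaL_spec

lemma betaL_theta_iterate_one (k : ℕ) : betaL (theta^[k] [1]) = k + 2 := by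
  have hspec : 1 < betaL (theta^[k] [1]) ∧ baseVal (betaL (theta^[k] [1])) _ = 1 :=
    betaL_theta_iterate_spec (p := 1) (q := 1) one_pos le_rfl (Nat.coprime_one_left 1)
  obtain ⟨hβ, hv⟩ := hspec
  rw [fwdDiff_ceilSeq_one_one, baseVal_const hβ, div_eq_one_iff_eq (by linarith)] at hv
  push_cast at hv
  linarith

lemma excRight_zero_one_le {δ x : ℝ} (hx : x ∈ excPiece k δ) : excRight k 0 1 ≤ x := by
  obtain ⟨⟨hx1, hout⟩, hkx, -⟩ := hx
  rcases k with _ | k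
  · exact hx1.le
  · have hJ : x ∉ Jint (theta^[k] [1]) := fun hmem =>
      hout (mem_iUnion₂.2 ⟨_, ⟨[1], Or.inr rfl, k, rfl⟩, hmem⟩)
    have hleft : betaL (theta^[k] [1]) < x := by
      have := hkx.1
      rw [betaL_theta_iterate_one]
      push_cast at this
      linarith
    exact ((lt_or_lt_of_notMem_Jint hJ).resolve_left hleft.not_gt).le

lemma hasBoxDimZero_excPiece (k : ℕ) {δ : ℝ} (hδ : 0 < δ) : HasBoxDimZero (excPiece k δ) := by
  refine hasBoxDimZero_of_farey_gaps (r := excRight k)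
    (l := fun p q => betaL (theta^[k] (christoffel p q))) hδ (isDigitCoding_const_add k)
    (fun p q hpq hc => excRight_spec hpq hc)
    (fun p q hp hpq hc => (betaL_theta_iterate_spec hp hpq hc).2) fun x hx => ?_
  refine ⟨hx.2.2, excRight_zero_one_le hx, hx.2.1.2.trans (betaL_theta_iterate_one k).ge,
    fun p q hmem => ?_⟩
  rw [excRight, if_neg fun h => (ne_of_christoffel_mem_FareySet hmem).1 h.2]
  exact lt_or_lt_of_notMem_Jint fun hJ =>
    hx.1.2 (mem_iUnion₂.2 ⟨_, ⟨_, Or.inl hmem, k, rfl⟩, hJ⟩)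

lemma exists_mem_excPiece {x : ℝ} (hx : x ∈ Eexc) :
    ∃ k j : ℕ, x ∈ excPiece k (1 / ((j : ℝ) + 1)) := by
  have hx1 : 1 < x := hx.1
  obtain ⟨j, hj⟩ := exists_nat_one_div_lt (sub_pos.2 hx1)
  obtain ⟨k, hk⟩ := Nat.exists_eq_succ_of_ne_zero (Nat.ceil_pos.2 (sub_pos.2 hx1)).ne'
  refine ⟨k, j, hx, ⟨?_, ?_⟩, by linarith⟩
  · have hlt : (k : ℝ) < x - 1 := Nat.lt_ceil.1 (by omega)
    linarith
  · have hle := Nat.le_ceil (x - 1)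
    rw [hk] at hle
    push_cast at hle
    linarith

lemma hasPackingDimZero_Eexc : HasPackingDimZero Eexc := by
  refine ⟨fun n => excPiece n.unpair.1 (1 / ((n.unpair.2 : ℝ) + 1)), fun x hx => ?_,
    fun n => hasBoxDimZero_excPiece _ (by positivity)⟩
  obtain ⟨k, j, hkj⟩ := exists_mem_excPiece hx
  exact mem_iUnion.2 ⟨Nat.pair k j, by rwa [Nat.unpair_pair]⟩

end Exceptional

/-! ### The infinitely renormalizable set -/

/-- The words of `Λ_e(m + 1)` with digits at most `M`. -/
def boundedLevel (M m : ℕ) : Set (List ℕ) := {S ∈ LambdaE (m + 1) | maxDigit S ≤ M}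

lemma exists_eq_subst_of_mem_LambdaE {m : ℕ} {S : List ℕ} (hS : S ∈ LambdaE (m + 2)) :
    ∃ S' ∈ LambdaE (m + 1), ∃ r ∈ FareySet, S = subst S' r := by
  obtain ⟨s, hs, rs, hlen, hrs, rfl⟩ := hS
  obtain rfl | ⟨rs, r, rfl⟩ := rs.eq_nil_or_concat
  · simp at hlen
  · rw [List.concat_eq_append] at *
    rw [List.length_append] at hlen
    exact ⟨rs.foldl subst s, ⟨s, hs, rs, by simpa using hlen, fun r' hr' => hrs r' (by simp [hr']),
      rfl⟩, r, hrs r (by simp), by simp⟩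

lemma two_le_length_of_mem_FareySet {r : List ℕ} (hr : r ∈ FareySet) : 2 ≤ r.length := by
  obtain ⟨p, q, hp, hpq, -, rfl⟩ := exists_christoffel_of_mem_FareySet hr
  rw [length_christoffel]
  omega

lemma lt_length_of_mem_LambdaE {m : ℕ} {S : List ℕ} (hS : S ∈ LambdaE (m + 1)) :
    m < S.length := by
  induction m generalizing S with
  | zero => exact (isAdmissible_of_mem_LambdaE hS).length_pos
  | succ m ih =>
    obtain ⟨S', hS', r, hr, rfl⟩ := exists_eq_subst_of_mem_LambdaE hS
    have hmul := Nat.mul_le_mul_left S'.length (two_le_length_of_mem_FareySet hr)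
    rw [(isAdmissible_of_mem_LambdaE hS').length_subst (isBinaryAdmissible_of_mem_FareySet hr)]
    have := ih hS'
    omega

/-- The weight `|S|⁻⁴` of a word: it is multiplicative under substitution, and the Farey words
have total weight at most `1`. -/
noncomputable def wordWeight (S : List ℕ) : ENNReal := ENNReal.ofReal (((S.length : ℝ) ^ 4)⁻¹)

lemma wordWeight_theta_iterate (k : ℕ) (w : List ℕ) : wordWeight (theta^[k] w) = wordWeight w := by
  rw [wordWeight, length_theta_iterate, wordWeight]

lemma wordWeight_subst {S r : List ℕ} (h : IsAdmissible S) (hr : IsBinaryAdmissible r) :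
    wordWeight (subst S r) = wordWeight S * wordWeight r := by
  rw [wordWeight, h.length_subst hr, wordWeight, wordWeight, ← ENNReal.ofReal_mul (by positivity),
    Nat.cast_mul, mul_pow, mul_inv]

lemma tsum_subtype_le_tsum_of_subset_range {α ι : Type*} (f : ι → α) (g : α → ENNReal) {A : Set α}
    (hA : A ⊆ range f) : ∑' a : A, g a ≤ ∑' i, g (f i) :=
  (ENNReal.tsum_mono_subtype g hA).trans
    (ENNReal.tsum_le_tsum_comp_of_surjective (f := rangeFactorization f)
      rangeFactorization_surjective fun a : range f => g a)

lemma mul_inv_pow_four_le (n : ℕ) :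
    ((n : ℝ) + 1) * (((n : ℝ) + 2) ^ 4)⁻¹ ≤ ((n : ℝ) + 1)⁻¹ - ((n : ℝ) + 2)⁻¹ := by
  have hn : (0 : ℝ) ≤ n := n.cast_nonneg
  have hsub : ((n : ℝ) + 1)⁻¹ - ((n : ℝ) + 2)⁻¹ = 1 / (((n : ℝ) + 1) * (n + 2)) := by
    field_simp
    ring
  rw [hsub, ← div_eq_mul_inv, div_le_div_iff₀ (by positivity) (by positivity)]
  nlinarith [pow_nonneg hn 2, pow_nonneg hn 3, pow_nonneg hn 4]

lemma sum_range_mul_inv_pow_four_le_one (N : ℕ) :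
    ∑ n ∈ Finset.range N, ((n : ℝ) + 1) * (((n : ℝ) + 2) ^ 4)⁻¹ ≤ 1 := by
  have htele := Finset.sum_range_sub' (fun n : ℕ => ((n : ℝ) + 1)⁻¹) N
  have hle := Finset.sum_le_sum fun n (_ : n ∈ Finset.range N) => mul_inv_pow_four_le n
  have hpos : (0 : ℝ) ≤ ((N : ℝ) + 1)⁻¹ := by positivity
  simp only [Nat.cast_add, Nat.cast_one, add_assoc, one_add_one_eq_two] at htele
  rw [htele] at hle
  refine hle.trans ?_
  simpa using hpos

lemma FareySet_subset_range_christoffel :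
    FareySet ⊆ range fun x : Σ n : ℕ, Fin (n + 1) => christoffel (x.2 + 1) (x.1 + 2) := by
  intro w hw
  obtain ⟨p, q, hp, hpq, -, rfl⟩ := exists_christoffel_of_mem_FareySet hw
  refine ⟨⟨q - 2, ⟨p - 1, by omega⟩⟩, ?_⟩
  dsimp only
  rw [Nat.sub_add_cancel hp, Nat.sub_add_cancel (by omega)]

lemma tsum_wordWeight_FareySet_le : ∑' r : FareySet, wordWeight r ≤ 1 := by
  have hfiber (n : ℕ) : ∑' i : Fin (n + 1), wordWeight (christoffel (i + 1) (n + 2)) =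
      ENNReal.ofReal (((n : ℝ) + 1) * (((n : ℝ) + 2) ^ 4)⁻¹) := by
    simp only [wordWeight, length_christoffel, tsum_fintype, Finset.sum_const, Finset.card_univ,
      Fintype.card_fin]
    rw [nsmul_eq_mul, ENNReal.ofReal_mul (by positivity), ← Nat.cast_succ, ENNReal.ofReal_natCast]
    push_cast
    rfl
  calc ∑' r : FareySet, wordWeight r
      ≤ ∑' x : Σ n : ℕ, Fin (n + 1), wordWeight (christoffel (x.2 + 1) (x.1 + 2)) :=
        tsum_subtype_le_tsum_of_subset_range _ wordWeight FareySet_subset_range_christoffel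
    _ = ∑' n : ℕ, ENNReal.ofReal (((n : ℝ) + 1) * (((n : ℝ) + 2) ^ 4)⁻¹) := by
        rw [ENNReal.tsum_sigma fun (n : ℕ) (i : Fin (n + 1)) =>
          wordWeight (christoffel (i + 1) (n + 2))]
        exact tsum_congr hfiber
    _ ≤ 1 := ENNReal.tsum_le_of_sum_range_le fun N => by
        rw [← ENNReal.ofReal_sum_of_nonneg fun i _ => by positivity]
        exact ENNReal.ofReal_le_one.2 (sum_range_mul_inv_pow_four_le_one N)

lemma tsum_wordWeight_FareyHat_le : ∑' r : FareyHat, wordWeight r ≤ 2 := by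
  refine (ENNReal.tsum_union_le wordWeight FareySet {[1]}).trans ?_
  rw [tsum_singleton ([1] : List ℕ) wordWeight, ← one_add_one_eq_two]
  exact add_le_add tsum_wordWeight_FareySet_le (by simp [wordWeight])

lemma boundedLevel_zero_subset_range (M : ℕ) :
    boundedLevel M 0 ⊆ range fun x : Fin (M + 1) × FareyHat => theta^[x.1] (x.2 : List ℕ) := by
  rintro _ ⟨⟨_, ⟨v, hv, k, rfl⟩, rs, hlen, -, rfl⟩, hM⟩
  obtain rfl := List.length_eq_zero_iff.1 hlen
  refine ⟨⟨⟨k, ?_⟩, ⟨v, hv⟩⟩, rfl⟩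
  obtain ⟨p, q, hp, hpq, hc, rfl⟩ := exists_christoffel_of_mem_FareyHat hv
  have hpair := (isAdmissible_christoffel hp hpq hc).extremalPair
  rw [List.foldl_nil, maxDigit, intPerSeq_maxCyc_theta_iterate hpair] at hM
  have := intPerSeq_nonneg (maxCyc (christoffel p q)) 0
  dsimp only at hM
  omega

lemma boundedLevel_succ_subset_range (M m : ℕ) :
    boundedLevel M (m + 1) ⊆ range fun x : boundedLevel M m × FareySet =>
      subst (x.1 : List ℕ) x.2 := by
  rintro _ ⟨hSr, hM⟩
  obtain ⟨S, hS, r, hr, rfl⟩ := exists_eq_subst_of_mem_LambdaE hSr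
  have hdigit := (isAdmissible_of_mem_LambdaE hS).maxDigit_le_maxDigit_subst
    (isBinaryAdmissible_of_mem_FareySet hr)
  exact ⟨(⟨S, hS, hdigit.trans hM⟩, ⟨r, hr⟩), rfl⟩

lemma tsum_wordWeight_boundedLevel_zero_le (M : ℕ) :
    ∑' S : boundedLevel M 0, wordWeight S ≤ (M + 1) * 2 :=
  calc ∑' S : boundedLevel M 0, wordWeight S
      ≤ ∑' x : Fin (M + 1) × FareyHat, wordWeight (theta^[x.1] (x.2 : List ℕ)) :=
        tsum_subtype_le_tsum_of_subset_range _ wordWeight (boundedLevel_zero_subset_range M)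
    _ = (M + 1) * ∑' v : FareyHat, wordWeight v := by
        simp only [wordWeight_theta_iterate]
        rw [ENNReal.tsum_prod (f := fun (_ : Fin (M + 1)) (v : FareyHat) => wordWeight v)]
        simp
    _ ≤ (M + 1) * 2 := by
        gcongr
        exact tsum_wordWeight_FareyHat_le

lemma tsum_wordWeight_boundedLevel_succ_le (M m : ℕ) :
    ∑' S : boundedLevel M (m + 1), wordWeight S ≤ ∑' S : boundedLevel M m, wordWeight S :=
  calc ∑' S : boundedLevel M (m + 1), wordWeight S
      ≤ ∑' x : boundedLevel M m × FareySet, wordWeight (subst (x.1 : List ℕ) x.2) :=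
        tsum_subtype_le_tsum_of_subset_range _ wordWeight (boundedLevel_succ_subset_range M m)
    _ = ∑' x : boundedLevel M m × FareySet, wordWeight x.1 * wordWeight x.2 :=
        tsum_congr fun x => wordWeight_subst (isAdmissible_of_mem_LambdaE x.1.2.1)
          (isBinaryAdmissible_of_mem_FareySet x.2.2)
    _ = (∑' S : boundedLevel M m, wordWeight S) * ∑' r : FareySet, wordWeight r := by
        rw [ENNReal.tsum_prod (f := fun (S : boundedLevel M m) (r : FareySet) =>
          wordWeight S * wordWeight r)]
        simp only [ENNReal.tsum_mul_left, ENNReal.tsum_mul_right]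
    _ ≤ ∑' S : boundedLevel M m, wordWeight S :=
        mul_le_of_le_one_right' tsum_wordWeight_FareySet_le

lemma tsum_wordWeight_boundedLevel_le (M m : ℕ) :
    ∑' S : boundedLevel M m, wordWeight S ≤ (M + 1) * 2 := by
  induction m with
  | zero => exact tsum_wordWeight_boundedLevel_zero_le M
  | succ m ih => exact (tsum_wordWeight_boundedLevel_succ_le M m).trans ih

namespace IsAdmissible

variable {S : List ℕ} {M : ℕ} {δ : ℝ}

lemma maxDigit_le_betaL (h : IsAdmissible S) : (maxDigit S : ℝ) ≤ betaL S :=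
  h.isDigitSeq_maxCyc.head_le_base h.betaL_spec.1 h.betaL_spec.2

lemma betaR_sub_betaL_le (h : IsAdmissible S) (hM : maxDigit S ≤ M) (hδ : 0 < δ)
    (hle : betaL S ≤ betaR S) (hr : 1 + δ ≤ betaR S) :
    betaR S - betaL S ≤ (M + 2) ^ 2 * ((M + 1) / δ) * (1 + δ)⁻¹ ^ (S.length - 1) := by
  have hlower : IsDigitSeq (M + 1) (intPerSeq (maxCyc S)) := h.isDigitSeq_maxCyc.mono (by omega)
  have hupper : IsDigitSeq (M + 1) (upperSeq S) :=
    (h.isDigitSeq_codeSeq isBinary_upper).mono (by omega)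
  have hagree (i : ℕ) (hi : i < S.length - 1) : intPerSeq (maxCyc S) i = upperSeq S i := by
    rw [upperSeq_apply h.ne_nil, if_pos (by omega), if_neg (by omega), add_zero]
  have hgap := hlower.base_sub_le_of_agree hupper hδ h.betaL_spec.1.le hle hr h.one_le_maxDigit
    (hlower.summable h.betaL_spec.1) hagree h.betaL_spec.2 h.betaR_spec.2
  push_cast at hgap
  rwa [add_assoc, one_add_one_eq_two] at hgap

lemma ediam_Jint_inter_Ici_le (h : IsAdmissible S) (hM : maxDigit S ≤ M) (hδ : 0 < δ) :
    Metric.ediam (Jint S ∩ Ici (1 + δ)) ≤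
      ENNReal.ofReal ((M + 2) ^ 2 * ((M + 1) / δ) * (1 + δ)⁻¹ ^ (S.length - 1)) := by
  rcases (Jint S ∩ Ici (1 + δ)).eq_empty_or_nonempty with hempty | ⟨x, ⟨hl, hr⟩, hx⟩
  · simp [hempty]
  · refine (Metric.ediam_mono inter_subset_left).trans ?_
    rw [Jint, Real.ediam_Icc]
    exact ENNReal.ofReal_le_ofReal
      (h.betaR_sub_betaL_le hM hδ (hl.trans hr) (le_trans (mem_Ici.1 hx) hr))

end IsAdmissible

lemma exists_ofReal_rpow_le_mul_wordWeight {K ν t : ℝ} (hK : 0 ≤ K) (hν0 : 0 < ν) (hν1 : ν < 1)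
    (ht : 0 < t) : ∃ C : ENNReal, C ≠ ⊤ ∧ ∀ S : List ℕ, S ≠ [] →
      ENNReal.ofReal (K * ν ^ (S.length - 1)) ^ t ≤ C * wordWeight S := by
  obtain ⟨B, hB⟩ := (tendsto_pow_mul_rpow_zero (K := K / ν) 4 (by positivity) hν0 hν1
    ht).bddAbove_range
  have hbound (n : ℕ) : (n : ℝ) ^ 4 * (K / ν * ν ^ n) ^ t ≤ B := hB ⟨n, rfl⟩
  have hB0 : 0 ≤ B := by simpa using hbound 0
  refine ⟨ENNReal.ofReal B, ENNReal.ofReal_ne_top, fun S hS => ?_⟩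
  have hpos : 0 < (S.length : ℝ) := by exact_mod_cast List.length_pos_iff.2 hS
  have hshift : K * ν ^ (S.length - 1) = K / ν * ν ^ S.length := by
    rw [← mul_pow_sub_one (List.length_pos_iff.2 hS).ne' ν]
    field_simp
  rw [wordWeight, ← ENNReal.ofReal_mul hB0, ENNReal.ofReal_rpow_of_nonneg (by positivity) ht.le,
    hshift]
  refine ENNReal.ofReal_le_ofReal ?_
  rw [← div_eq_mul_inv, le_div_iff₀ (by positivity), mul_comm]
  exact hbound _

lemma exists_tsum_ediam_rpow_le {δ t : ℝ} (hδ : 0 < δ) (ht : 0 < t) (M : ℕ) :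
    ∃ B : ENNReal, B ≠ ⊤ ∧
      ∀ m, ∑' S : boundedLevel M m, Metric.ediam (Jint S ∩ Ici (1 + δ)) ^ t ≤ B := by
  obtain ⟨C, hC, hweight⟩ := exists_ofReal_rpow_le_mul_wordWeight
    (K := (M + 2) ^ 2 * ((M + 1) / δ)) (ν := (1 + δ)⁻¹) (by positivity) (by positivity)
    (inv_lt_one_of_one_lt₀ (by linarith)) ht
  refine ⟨C * ((M + 1) * 2), ENNReal.mul_ne_top hC (by finiteness), fun m => ?_⟩
  calc ∑' S : boundedLevel M m, Metric.ediam (Jint S ∩ Ici (1 + δ)) ^ t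
      ≤ ∑' S : boundedLevel M m, C * wordWeight S := by
        refine ENNReal.tsum_le_tsum fun S => ?_
        have h := isAdmissible_of_mem_LambdaE S.2.1
        exact (ENNReal.rpow_le_rpow (h.ediam_Jint_inter_Ici_le S.2.2 hδ) ht.le).trans
          (hweight _ h.ne_nil)
    _ ≤ C * ((M + 1) * 2) := by
        rw [ENNReal.tsum_mul_left]
        gcongr
        exact tsum_wordWeight_boundedLevel_le M m

lemma Einf_inter_Icc_subset (a : ℝ) (M m : ℕ) :
    Einf ∩ Icc a M ⊆ ⋃ S : boundedLevel M m, Jint S ∩ Ici a := by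
  rintro x ⟨hx, hax, hxM⟩
  obtain ⟨S, hS, hxS⟩ := mem_iUnion₂.1 (mem_iInter₂.1 hx (m + 1) (Nat.le_add_left 1 m))
  have hdigit : (maxDigit S : ℝ) ≤ M :=
    (isAdmissible_of_mem_LambdaE hS).maxDigit_le_betaL.trans (hxS.1.trans hxM)
  exact mem_iUnion.2 ⟨⟨S, hS, by exact_mod_cast hdigit⟩, hxS, hax⟩

lemma hausdorffMeasure_Einf_inter_Icc_ne_top {δ t : ℝ} (hδ : 0 < δ) (ht : 0 < t) (M : ℕ) :
    Measure.hausdorffMeasure t (Einf ∩ Icc (1 + δ) M) ≠ ⊤ := by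
  obtain ⟨B, hB, hsum⟩ := exists_tsum_ediam_rpow_le hδ ht M
  have hν1 : (1 + δ)⁻¹ < 1 := inv_lt_one_of_one_lt₀ (by linarith)
  have hsmall : Tendsto (fun m : ℕ => ENNReal.ofReal
      ((M + 2) ^ 2 * ((M + 1) / δ) * (1 + δ)⁻¹ ^ m)) atTop (𝓝 0) := by
    rw [← ENNReal.ofReal_zero]
    refine ENNReal.tendsto_ofReal ?_
    simpa using (tendsto_pow_atTop_nhds_zero_of_lt_one (by positivity) hν1).const_mul
      (((M : ℝ) + 2) ^ 2 * ((M + 1) / δ))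
  have hdiam (m : ℕ) (S : boundedLevel M m) : Metric.ediam (Jint S ∩ Ici (1 + δ)) ≤
      ENNReal.ofReal ((M + 2) ^ 2 * ((M + 1) / δ) * (1 + δ)⁻¹ ^ m) := by
    refine ((isAdmissible_of_mem_LambdaE S.2.1).ediam_Jint_inter_Ici_le S.2.2 hδ).trans
      (ENNReal.ofReal_le_ofReal ?_)
    have hlength := lt_length_of_mem_LambdaE S.2.1
    exact mul_le_mul_of_nonneg_left
      (pow_le_pow_of_le_one (by positivity) hν1.le (by omega)) (by positivity)
  refine ne_top_of_le_ne_top hB ((Measure.hausdorffMeasure_le_liminf_tsum t _ _ hsmall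
    (fun m (S : boundedLevel M m) => Jint S ∩ Ici (1 + δ)) (Eventually.of_forall hdiam)
    (Eventually.of_forall fun m => Einf_inter_Icc_subset _ M m)).trans ?_)
  exact (liminf_le_liminf (Eventually.of_forall hsum)).trans_eq (liminf_const B)

lemma dimH_Einf_inter_Icc {δ : ℝ} (hδ : 0 < δ) (M : ℕ) : dimH (Einf ∩ Icc (1 + δ) M) = 0 := by
  refine le_antisymm (le_of_forall_gt_imp_ge_of_dense fun d hd => ?_) zero_le
  obtain ⟨t, ht, htd⟩ := ENNReal.lt_iff_exists_nnreal_btwn.1 hd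
  exact (dimH_le_of_hausdorffMeasure_ne_top (hausdorffMeasure_Einf_inter_Icc_ne_top hδ
    (by exact_mod_cast ht) M)).trans htd.le

lemma one_lt_of_mem_Einf {x : ℝ} (hx : x ∈ Einf) : 1 < x := by
  obtain ⟨S, hS, hxS⟩ := mem_iUnion₂.1 (mem_iInter₂.1 hx 1 self_mem_Ici)
  exact (isAdmissible_of_mem_LambdaE hS).betaL_spec.1.trans_le hxS.1

lemma dimH_Einf : dimH Einf = 0 := by
  have hcover : Einf ⊆ ⋃ (j : ℕ) (M : ℕ), Einf ∩ Icc (1 + 1 / ((j : ℝ) + 1)) M := fun x hx => by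
    obtain ⟨j, hj⟩ := exists_nat_one_div_lt (sub_pos.2 (one_lt_of_mem_Einf hx))
    obtain ⟨M, hM⟩ := exists_nat_ge x
    exact mem_iUnion₂.2 ⟨j, M, hx, by linarith, hM⟩
  refine le_antisymm ((dimH_mono hcover).trans ?_) zero_le
  simp only [dimH_iUnion]
  exact iSup₂_le fun j M => (dimH_Einf_inter_Icc (by positivity) M).le

/-- (i) The exceptional set `E` has packing dimension zero; (ii) each
relative exceptional set `E^S`, `S ∈ Λ_e`, has box-counting dimension zero; (iii) the
infinitely renormalizable set `E_∞` has Hausdorff dimension zero. -/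
theorem exceptional_sets_zero_dimensional :
    HasPackingDimZero Eexc ∧
    (∀ S ∈ LambdaExt, HasBoxDimZero (EexcRel S)) ∧
    dimH Einf = 0 := by
  refine ⟨hasPackingDimZero_Eexc, fun S hS => ?_, dimH_Einf⟩
  obtain ⟨m, -, hSm⟩ := mem_iUnion₂.1 hS
  exact (isAdmissible_of_mem_LambdaE hSm).hasBoxDimZero_EexcRel
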